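/- Let (V,E,Ψ) be a strongly connected planar box-like self-affine GIFS, (p_e)_{e∈E} positive weights with ∑_{e:i(e)=v} p_e=1 for every v, and (μ_v)_{v∈V} the associated graph-directed box-like self-affine measure family. Then for every q≥0 and every v∈V the L^q-spectra τ_{μ_v^x}(q) and τ_{μ_v^y}(q) exist (upper and lower L^q-spectra coincide). Moreover, the family {μ_v^x, μ_v^y}_{v∈V} can be divided into two disjoint families A and B with #A=#B=#V such that there exist functions τ_A, τ_B on [0,∞) with τ_ν(q)=τ_A(q) for all ν∈A and τ_ν(q)=τ_B(q) for all ν∈B for every q≥0, and for every v∈V either (μ_v^x∈A and μ_v^y∈B) or (μ_v^x∈B and μ_v^y∈A). In particular, if every T_e is diagonal one may take A={μ_v^x}_{v∈V} and B={μ_v^y}_{v∈V}. -/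

import Mathlib

open MeasureTheory Filter Set
open scoped Classical

noncomputable section

namespace LqGIFS

/-! ### Mesh cubes, moment sums, L^q spectra, box dimension -/

/-- Closed cube of the `δ`-mesh of `ℝ`. -/
def meshCube1 (δ : ℝ) (k : ℤ) : Set ℝ := Set.Icc ((k : ℝ) * δ) (((k : ℝ) + 1) * δ)

/-- Closed cube of the `δ`-mesh of `ℝ²`. -/
def meshCube2 (δ : ℝ) (k : ℤ × ℤ) : Set (ℝ × ℝ) :=
  (Set.Icc ((k.1 : ℝ) * δ) (((k.1 : ℝ) + 1) * δ)) ×ˢ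
    (Set.Icc ((k.2 : ℝ) * δ) (((k.2 : ℝ) + 1) * δ))

/-- The moment sum `D_δ^q(ν)` for a measure on `ℝ` (cubes of zero measure are omitted,
so that at `q = 0` this counts the mesh cubes of positive measure). -/
def Dq1 (ν : Measure ℝ) (δ q : ℝ) : ℝ :=
  ∑' k : ℤ, if ν (meshCube1 δ k) = 0 then 0 else (ν (meshCube1 δ k)).toReal ^ q

/-- The moment sum `D_δ^q(ν)` for a measure on `ℝ²`. -/
def Dq2 (ν : Measure (ℝ × ℝ)) (δ q : ℝ) : ℝ :=
  ∑' k : ℤ × ℤ, if ν (meshCube2 δ k) = 0 then 0 else (ν (meshCube2 δ k)).toReal ^ q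

/-- The `L^q`-spectrum of a measure on `ℝ` exists and equals `s` (i.e. upper and lower
`L^q`-spectra coincide and equal `s`). -/
def HasLq1 (ν : Measure ℝ) (q s : ℝ) : Prop :=
  Tendsto (fun δ : ℝ => Real.log (Dq1 ν δ q) / (-Real.log δ))
    (nhdsWithin 0 (Set.Ioi 0)) (nhds s)

/-- The `L^q`-spectrum of a measure on `ℝ²` exists and equals `s`. -/
def HasLq2 (ν : Measure (ℝ × ℝ)) (q s : ℝ) : Prop :=
  Tendsto (fun δ : ℝ => Real.log (Dq2 ν δ q) / (-Real.log δ))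
    (nhdsWithin 0 (Set.Ioi 0)) (nhds s)

/-- Number of closed `δ`-mesh cubes of `ℝ²` meeting `X`. -/
def boxCount (X : Set (ℝ × ℝ)) (δ : ℝ) : ℕ :=
  Set.ncard {k : ℤ × ℤ | (X ∩ meshCube2 δ k).Nonempty}

/-- The box dimension of `X` exists and equals `d`. -/
def HasBoxDim (X : Set (ℝ × ℝ)) (d : ℝ) : Prop :=
  Tendsto (fun δ : ℝ => Real.log (boxCount X δ) / (-Real.log δ))
    (nhdsWithin 0 (Set.Ioi 0)) (nhds d)

/-! ### Matrices: 1-norm, spectral radius, permutation matrices -/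

/-- The 1-norm `‖A‖ = ∑_{i,j} |a_{ij}|` of a square matrix. -/
def mnorm {ι : Type*} [Fintype ι] (A : Matrix ι ι ℝ) : ℝ := ∑ i, ∑ j, |A i j|

/-- The spectral radius of a square real matrix, via the Gelfand formula. -/
def specRad {ι : Type*} [Fintype ι] [DecidableEq ι] (A : Matrix ι ι ℝ) : ℝ :=
  Filter.limsup (fun k : ℕ => (mnorm (A ^ k)) ^ ((k : ℝ)⁻¹)) Filter.atTop

/-- A square 0-1 matrix with exactly one 1 in each row and each column. -/
def IsPermMatrix {ι : Type*} (Z : Matrix ι ι ℝ) : Prop :=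
  (∀ i j, Z i j = 0 ∨ Z i j = 1) ∧ (∀ i, ∃! j, Z i j = 1) ∧ (∀ j, ∃! i, Z i j = 1)

/-! ### Directed graphs -/

/-- Strong connectivity of the finite directed graph with edge set `E`,
initial vertex map `ini` and terminal vertex map `ter`. -/
def GraphSC {V E : Type*} (ini ter : E → V) : Prop :=
  ∀ v v' : V, Relation.TransGen (fun u u' : V => ∃ e, ini e = u ∧ ter e = u') v v'

/-- The matrix `F^{(q)}_{x,y}` with entry `p_{e'}^q a_{e'}^x b_{e'}^y` at `(e,e')` when
`t(e) = i(e')`, and `0` otherwise. -/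
def FmatG {V E : Type*} (ini ter : E → V) (p a b : E → ℝ) (q x y : ℝ) :
    Matrix E E ℝ :=
  fun e e' => if ter e = ini e' then p e' ^ q * a e' ^ x * b e' ^ y else 0

/-- `f` is the entrywise product of the normalized left and right Perron vectors of the
irreducible matrix `F^{(q)}_{x,y(x)}` (spectral radius 1). -/
def IsPerronData {V E : Type*} [Fintype E] [DecidableEq E] (ini ter : E → V)
    (p a b : E → ℝ) (q x yx : ℝ) (f : E → ℝ) : Prop :=
  specRad (FmatG ini ter p a b q x yx) = 1 ∧
  ∃ u v : E → ℝ, (∀ e, 0 < u e) ∧ (∀ e, 0 < v e) ∧ (∑ e, u e) = 1 ∧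
    (FmatG ini ter p a b q x yx).mulVec u = u ∧
    (FmatG ini ter p a b q x yx).vecMul v = v ∧
    (∑ e, v e * u e) = 1 ∧ (∀ e, f e = v e * u e)

/-! ### Planar box-like graph-directed self-affine systems -/

/-- A planar box-like self-affine GIFS: a finite directed graph together with, for each
edge `e`, a contraction `ψ_e(z) = T_e z + t_e` whose linear part is the diagonal matrix
`diag(±a_e, ±b_e)` (when `diag e = true`) or the anti-diagonal matrix with entries
`±a_e` (top right) and `±b_e` (bottom left) (when `diag e = false`), `0 < a_e, b_e < 1`. -/
structure BoxLikeGIFS (V E : Type*) where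
  init : E → V
  term : E → V
  a : E → ℝ
  b : E → ℝ
  sa : E → ℝ
  sb : E → ℝ
  diag : E → Bool
  trans : E → ℝ × ℝ
  a_mem : ∀ e, a e ∈ Set.Ioo (0 : ℝ) 1
  b_mem : ∀ e, b e ∈ Set.Ioo (0 : ℝ) 1
  sa_mem : ∀ e, sa e = 1 ∨ sa e = -1
  sb_mem : ∀ e, sb e = 1 ∨ sb e = -1
  edge_exists : ∀ v, ∃ e, init e = v

namespace BoxLikeGIFS

variable {V E : Type*}

/-- The contraction `ψ_e`. -/
def map (S : BoxLikeGIFS V E) (e : E) : ℝ × ℝ → ℝ × ℝ := fun z =>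
  if S.diag e then
    (S.sa e * S.a e * z.1 + (S.trans e).1, S.sb e * S.b e * z.2 + (S.trans e).2)
  else
    (S.sa e * S.a e * z.2 + (S.trans e).1, S.sb e * S.b e * z.1 + (S.trans e).2)

def StronglyConnected (S : BoxLikeGIFS V E) : Prop := GraphSC S.init S.term

/-- The open unit square `(0,1)²`. -/
def unitSq : Set (ℝ × ℝ) := Set.Ioo (0 : ℝ) 1 ×ˢ Set.Ioo (0 : ℝ) 1

/-- The rectangular open set condition. -/
def ROSC (S : BoxLikeGIFS V E) : Prop :=
  (∀ e : E, S.map e '' unitSq ⊆ unitSq) ∧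
  ∀ e e' : E, e ≠ e' → S.init e = S.init e' →
    Disjoint (S.map e '' unitSq) (S.map e' '' unitSq)

/-- Positive weights summing to one at each vertex. -/
def IsWeights [Fintype E] (S : BoxLikeGIFS V E) (p : E → ℝ) : Prop :=
  (∀ e, 0 < p e) ∧ ∀ v : V, (∑ e : E, if S.init e = v then p e else 0) = 1

/-- `μ` is the associated graph-directed box-like self-affine measure family. -/
def IsGDMeasure [Fintype E] (S : BoxLikeGIFS V E) (p : E → ℝ)
    (μ : V → Measure (ℝ × ℝ)) : Prop :=
  (∀ v, IsProbabilityMeasure (μ v)) ∧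
  ∀ v : V, μ v =
    ∑ e : E, if S.init e = v then
      ENNReal.ofReal (p e) • ((μ (S.term e)).map (S.map e)) else (0 : Measure (ℝ × ℝ))

/-- `X` is the associated graph-directed self-affine carpet family. -/
def IsGDAttractor (S : BoxLikeGIFS V E) (X : V → Set (ℝ × ℝ)) : Prop :=
  (∀ v, (X v).Nonempty ∧ IsCompact (X v)) ∧
  ∀ v : V, X v = ⋃ e : E, ⋃ _ : S.init e = v, S.map e '' X (S.term e)

/-- The matrix `F^{(q)}_{x,y}` of the system. -/
def Fmat (S : BoxLikeGIFS V E) (p : E → ℝ) (q x y : ℝ) : Matrix E E ℝ :=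
  FmatG S.init S.term p S.a S.b q x y

/-- The `(2#E) × (2#E)` block matrix `𝒢^{(q)}_{x,y}`, indexed by `E × Bool`
(`false` = first index of the block, `true` = second). -/
def Gmat (S : BoxLikeGIFS V E) (p : E → ℝ) (τx τy : V → ℝ) (q x y : ℝ) :
    Matrix (E × Bool) (E × Bool) ℝ := fun i j =>
  if S.term i.1 = S.init j.1 then
    if S.diag j.1 then
      if i.2 = false ∧ j.2 = false then
        p j.1 ^ q * S.a j.1 ^ (x + τx (S.term j.1)) * S.b j.1 ^ (y - τx (S.term j.1))
      else if i.2 = true ∧ j.2 = true then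
        p j.1 ^ q * S.b j.1 ^ (x + τy (S.term j.1)) * S.a j.1 ^ (y - τy (S.term j.1))
      else 0
    else
      if i.2 = false ∧ j.2 = true then
        p j.1 ^ q * S.a j.1 ^ (x + τy (S.term j.1)) * S.b j.1 ^ (y - τy (S.term j.1))
      else if i.2 = true ∧ j.2 = false then
        p j.1 ^ q * S.b j.1 ^ (x + τx (S.term j.1)) * S.a j.1 ^ (y - τx (S.term j.1))
      else 0
  else 0

/-! ### Words -/

/-- An admissible word: consecutive edges are composable. -/
def Admissible (S : BoxLikeGIFS V E) (w : List E) : Prop :=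
  List.Chain' (fun e e' => S.term e = S.init e') w

/-- `(c_w, d_w)`: width and height of the rectangle `ψ_w([0,1]²)`. -/
def wdims (S : BoxLikeGIFS V E) : List E → ℝ × ℝ
  | [] => (1, 1)
  | e :: w =>
      if S.diag e then (S.a e * (wdims S w).1, S.b e * (wdims S w).2)
      else (S.a e * (wdims S w).2, S.b e * (wdims S w).1)

/-- Whether `T_w` is diagonal (`true`) or anti-diagonal (`false`). -/
def wordDiag (S : BoxLikeGIFS V E) : List E → Bool
  | [] => true
  | e :: w => S.diag e == wordDiag S w

/-- The larger singular value `α₁(w) = max(c_w, d_w)` of `T_w`. -/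
def alpha1 (S : BoxLikeGIFS V E) (w : List E) : ℝ := max (S.wdims w).1 (S.wdims w).2

/-- The smaller singular value `α₂(w) = min(c_w, d_w)` of `T_w`. -/
def alpha2 (S : BoxLikeGIFS V E) (w : List E) : ℝ := min (S.wdims w).1 (S.wdims w).2

/-- Initial vertex of a (nonempty) word. -/
def wordInit [Nonempty V] (S : BoxLikeGIFS V E) (w : List E) : V :=
  (w.head?.map S.init).getD (Classical.arbitrary V)

/-- Terminal vertex of a (nonempty) word. -/
def wordTerm [Nonempty V] (S : BoxLikeGIFS V E) (w : List E) : V :=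
  (w.getLast?.map S.term).getD (Classical.arbitrary V)

/-- `p_w = p_{w_1} ⋯ p_{w_k}`. -/
def wordProb (p : E → ℝ) (w : List E) : ℝ := (w.map p).prod

/-- `τ_w(q)`: given the values `τx v`, `τy v` of the `L^q`-spectra of the two coordinate
projections of `μ_v`, this is the `L^q`-spectrum of the projection of `μ_{t(w)} ∘ ψ_w⁻¹`
onto the longest side of `ψ_w([0,1]²)`, i.e. `τx (t w)` if `π_w = π_x` and `τy (t w)`
otherwise. -/
def wordTau [Nonempty V] (S : BoxLikeGIFS V E) (τx τy : V → ℝ) (w : List E) : ℝ :=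
  if ((S.wdims w).2 ≤ (S.wdims w).1 ↔ S.wordDiag w = true) then τx (S.wordTerm w)
  else τy (S.wordTerm w)

/-- The modified singular value function
`φ^{s,q}(w) = p_w^q α₁(w)^{τ_w(q)} α₂(w)^{s - τ_w(q)}`. -/
def msvf [Nonempty V] (S : BoxLikeGIFS V E) (p : E → ℝ) (τx τy : V → ℝ)
    (s q : ℝ) (w : List E) : ℝ :=
  wordProb p w ^ q * S.alpha1 w ^ (S.wordTau τx τy w) *
    S.alpha2 w ^ (s - S.wordTau τx τy w)

/-- The modified singular value function matrix `A_k^{s,q}`. -/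
def Amat [Nonempty V] [Fintype E] (S : BoxLikeGIFS V E) (p : E → ℝ) (τx τy : V → ℝ)
    (s q : ℝ) (k : ℕ) : Matrix V V ℝ := fun v v' =>
  ∑ f : Fin k → E,
    if S.Admissible (List.ofFn f) ∧ S.wordInit (List.ofFn f) = v ∧
        S.wordTerm (List.ofFn f) = v'
    then S.msvf p τx τy s q (List.ofFn f) else 0

/-- The family `E^*_δ` of admissible words whose shortest side drops below `δ`
exactly at the last letter. -/
def EstarDelta (S : BoxLikeGIFS V E) (δ : ℝ) : Set (List E) :=
  {w | w ≠ [] ∧ S.Admissible w ∧ S.alpha2 w < δ ∧ δ ≤ S.alpha2 w.dropLast}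

end BoxLikeGIFS

/-! ### Partition of the projections, for the splitting proposition -/

/-- The projection family: `(v, false) ↦ μ_v^x` and `(v, true) ↦ μ_v^y`. -/
def projMeas {V : Type*} (μ : V → Measure (ℝ × ℝ)) (i : V × Bool) : Measure ℝ :=
  if i.2 then (μ i.1).map Prod.snd else (μ i.1).map Prod.fst

/-- `A`, `B` is a partition of the projection family `{μ_v^x, μ_v^y}_v` into two disjoint
families of cardinality `#V`, on each of which the `L^q`-spectra exist and share a common
value, and which splits `{μ_v^x, μ_v^y}` for each `v`. -/
def GoodPartition {V : Type*} [Fintype V] (μ : V → Measure (ℝ × ℝ))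
    (A B : Finset (V × Bool)) : Prop :=
  Disjoint A B ∧ A ∪ B = Finset.univ ∧
  A.card = Fintype.card V ∧ B.card = Fintype.card V ∧
  ∃ τA τB : ℝ → ℝ,
    (∀ q : ℝ, 0 ≤ q → ∀ i ∈ A, HasLq1 (projMeas μ i) q (τA q)) ∧
    (∀ q : ℝ, 0 ≤ q → ∀ i ∈ B, HasLq1 (projMeas μ i) q (τB q)) ∧
    ∀ v : V, ((v, false) ∈ A ∧ (v, true) ∈ B) ∨ ((v, false) ∈ B ∧ (v, true) ∈ A)

end LqGIFS

end

open LqGIFS MeasureTheory Filter Set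

/-!
The mesh sums of a measure `ν` on the line are comparable, up to the factor `δ`, with the moments
`∫ ν(B(x, δ)) ^ q dx`, which transform exactly under similarities. Each projection `μ_v^x`, `μ_v^y`
is a weighted sum of similar copies of such projections, an antidiagonal edge exchanging the two
coordinates. Subdividing until all contraction ratios are comparable to `ε` writes a projection `ν`
as a mixture of copies at scale `ε`. Cut the moment at scale `εδ` into windows of size `ε`: only the
copies near a window matter there, and their total weight is about the mass of the window. Jensen's
inequality then bounds the moment at scale `εδ` by a constant times the product of the moments at
scales `ε` and `δ` if `q ≥ 1`, and bounds it from below in the same way if `q ≤ 1`. Fekete's lemma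
yields the existence of the spectrum.

The moment of a measure dominates the moments of the measures that occur in its decomposition, so
measures that occur in each other's iterated decompositions share their spectrum. By strong
connectivity every vertex is reached from a given coordinate in at least one of its coordinates, and
reachability of coordinates is symmetric. The class of `μ_v^x` therefore contains a projection at
each vertex, and exchanging all coordinates maps it onto the complementary choice of projections.
-/

namespace LqGIFS

open Metric
open scoped ENNReal NNReal Topology

/-! ### Powers of masses -/

/-- `x ^ q` in `ℝ≥0∞`, except that `0` has power `0` also for `q = 0`. With this convention the
moments of exponent `0` count, or measure, the sets of positive mass. -/
noncomputable def powPos (q : ℝ) (x : ℝ≥0∞) : ℝ≥0∞ := if x = 0 then 0 else x ^ q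

@[simp]
lemma powPos_zero (q : ℝ) : powPos q 0 = 0 := by simp [powPos]

lemma powPos_of_pos {q : ℝ} (hq : 0 < q) (x : ℝ≥0∞) : powPos q x = x ^ q := by
  rcases eq_or_ne x 0 with rfl | hx
  · simp [hq]
  · simp [powPos, hx]

lemma powPos_mono {q : ℝ} (hq : 0 ≤ q) : Monotone (powPos q) := by
  intro x y hxy
  rcases eq_or_ne x 0 with rfl | hx
  · simp
  · have hy : y ≠ 0 := ne_bot_of_le_ne_bot hx hxy
    rw [powPos, if_neg hx, powPos, if_neg hy]
    exact ENNReal.rpow_le_rpow hxy hq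

lemma measurable_powPos (q : ℝ) : Measurable (powPos q) :=
  Measurable.ite (measurableSet_singleton 0) measurable_const (by fun_prop)

lemma powPos_mul {q : ℝ} (hq : 0 ≤ q) (x y : ℝ≥0∞) :
    powPos q (x * y) = powPos q x * powPos q y := by
  rcases eq_or_ne x 0 with rfl | hx
  · simp
  rcases eq_or_ne y 0 with rfl | hy
  · simp
  simp [powPos, hx, hy, ENNReal.mul_rpow_of_nonneg _ _ hq]

lemma powPos_ne_top {q : ℝ} (hq : 0 ≤ q) {x : ℝ≥0∞} (hx : x ≠ ∞) : powPos q x ≠ ∞ := by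
  unfold powPos
  split_ifs
  · exact ENNReal.zero_ne_top
  · exact ENNReal.rpow_ne_top_of_nonneg hq hx

lemma powPos_ne_zero {q : ℝ} (hq : 0 ≤ q) {x : ℝ≥0∞} (hx : x ≠ 0) : powPos q x ≠ 0 := by
  simp [powPos, hx, hq.not_gt]

lemma rpow_sub_one_mul_self (q : ℝ) {x : ℝ≥0∞} (hx : x ≠ ∞) : x ^ (q - 1) * x = powPos q x := by
  rcases eq_or_ne x 0 with rfl | hx0
  · simp
  · rw [powPos, if_neg hx0]
    conv_lhs => enter [2]; rw [← ENNReal.rpow_one x]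
    rw [← ENNReal.rpow_add _ _ hx0 hx, sub_add_cancel]

lemma powPos_sum_le_card {ι : Type*} (s : Finset ι) {q : ℝ} (hq : 0 ≤ q) (x : ι → ℝ≥0∞) :
    powPos q (∑ i ∈ s, x i) ≤ powPos q s.card * ∑ i ∈ s, powPos q (x i) := by
  rcases s.eq_empty_or_nonempty with rfl | hs
  · simp
  obtain ⟨m, hm, hmax⟩ := s.exists_max_image x hs
  calc powPos q (∑ i ∈ s, x i)
      ≤ powPos q (s.card * x m) :=
        powPos_mono hq ((s.sum_le_card_nsmul x (x m) hmax).trans_eq (nsmul_eq_mul _ _))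
    _ = powPos q s.card * powPos q (x m) := powPos_mul hq _ _
    _ ≤ powPos q s.card * ∑ i ∈ s, powPos q (x i) := by
        gcongr
        exact Finset.single_le_sum (f := fun i => powPos q (x i)) (fun _ _ => zero_le) hm

lemma powPos_sum_mul_le {ι : Type*} (s : Finset ι) {q : ℝ} (hq : 1 ≤ q) (w x : ι → ℝ≥0∞) :
    powPos q (∑ i ∈ s, w i * x i) ≤
      (∑ i ∈ s, w i) ^ (q - 1) * ∑ i ∈ s, w i * powPos q (x i) := by
  have hq0 : 0 < q := one_pos.trans_le hq
  simp only [powPos_of_pos hq0]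
  calc (∑ i ∈ s, w i * x i) ^ q
      ≤ ((∑ i ∈ s, w i) ^ (1 - q⁻¹) * (∑ i ∈ s, w i * x i ^ q) ^ q⁻¹) ^ q :=
        ENNReal.rpow_le_rpow (ENNReal.inner_le_weight_mul_Lp_of_nonneg s hq w x) hq0.le
    _ = (∑ i ∈ s, w i) ^ (q - 1) * ∑ i ∈ s, w i * x i ^ q := by
        rw [ENNReal.mul_rpow_of_nonneg _ _ hq0.le, ← ENNReal.rpow_mul, ← ENNReal.rpow_mul,
          inv_mul_cancel₀ hq0.ne', ENNReal.rpow_one, sub_mul, inv_mul_cancel₀ hq0.ne', one_mul]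

lemma sum_mul_powPos_le {ι : Type*} (s : Finset ι) {q : ℝ} (hq0 : 0 ≤ q) (hq1 : q ≤ 1)
    (w x : ι → ℝ≥0∞) :
    ∑ i ∈ s, w i * powPos q (x i) ≤
      (∑ i ∈ s, w i) ^ (1 - q) * powPos q (∑ i ∈ s, w i * x i) := by
  rcases hq0.eq_or_lt with rfl | hq0
  · rcases eq_or_ne (∑ i ∈ s, w i * x i) 0 with h0 | h0
    · have hwx : ∀ i ∈ s, w i = 0 ∨ x i = 0 := by simpa using h0
      refine (Finset.sum_eq_zero fun i hi => ?_).trans_le zero_le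
      rcases hwx i hi with h | h <;> simp [h]
    · simp only [powPos, if_neg h0, ENNReal.rpow_zero, sub_zero, ENNReal.rpow_one, mul_one]
      refine Finset.sum_le_sum fun i _ => ?_
      split_ifs <;> simp
  · simp only [powPos_of_pos hq0]
    have h := ENNReal.inner_le_weight_mul_Lp_of_nonneg s (one_le_inv_iff₀.2 ⟨hq0, hq1⟩) w
      (fun i => x i ^ q)
    simpa only [inv_inv, ← ENNReal.rpow_mul, mul_inv_cancel₀ hq0.ne', ENNReal.rpow_one] using h

lemma le_powPos_sum_mul {ι : Type*} (s : Finset ι) {q : ℝ} (hq0 : 0 ≤ q) (hq1 : q ≤ 1)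
    (w x : ι → ℝ≥0∞) (hw : ∑ i ∈ s, w i ≠ ∞) :
    (∑ i ∈ s, w i) ^ (q - 1) * ∑ i ∈ s, w i * powPos q (x i) ≤
      powPos q (∑ i ∈ s, w i * x i) := by
  rcases eq_or_ne (∑ i ∈ s, w i) 0 with h0 | h0
  · have hw0 : ∀ i ∈ s, w i = 0 := by simpa using h0
    have : ∑ i ∈ s, w i * powPos q (x i) = 0 :=
      Finset.sum_eq_zero fun i hi => by rw [hw0 i hi, zero_mul]
    simp [this]
  calc (∑ i ∈ s, w i) ^ (q - 1) * ∑ i ∈ s, w i * powPos q (x i)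
      ≤ (∑ i ∈ s, w i) ^ (q - 1) *
          ((∑ i ∈ s, w i) ^ (1 - q) * powPos q (∑ i ∈ s, w i * x i)) := by
        gcongr
        exact sum_mul_powPos_le s hq0 hq1 w x
    _ = powPos q (∑ i ∈ s, w i * x i) := by
        rw [← mul_assoc, ← ENNReal.rpow_add _ _ h0 hw]
        simp

/-! ### Fekete's lemma and scaling exponents -/

lemma abs_sub_le_nat_mul {φ : ℝ → ℝ} {c : ℝ}
    (hosc : ∀ s t, 0 ≤ s → s ≤ t → t ≤ s + 1 → |φ t - φ s| ≤ c) (n : ℕ) :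
    |φ n - φ 0| ≤ n * c := by
  induction n with
  | zero => simp
  | succ n ih =>
    have hstep : |φ (n + 1) - φ n| ≤ c := hosc n (n + 1) n.cast_nonneg (by linarith) le_rfl
    push_cast
    linarith [abs_sub_le (φ (n + 1)) (φ n) (φ 0)]

lemma exists_tendsto_nat_div_of_subadditive {φ : ℝ → ℝ} {c c' : ℝ}
    (hsub : ∀ s t, 0 ≤ s → 0 ≤ t → φ (s + t) ≤ φ s + φ t + c)
    (hosc : ∀ s t, 0 ≤ s → s ≤ t → t ≤ s + 1 → |φ t - φ s| ≤ c') :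
    ∃ l, Tendsto (fun n : ℕ => (φ n + c) / n) atTop (𝓝 l) := by
  have hc' : 0 ≤ c' := (abs_nonneg _).trans (hosc 0 0 le_rfl le_rfl (by simp))
  have hu : Subadditive fun n : ℕ => φ n + c := fun m n => by
    push_cast
    linarith [hsub m n m.cast_nonneg n.cast_nonneg]
  refine ⟨hu.lim, hu.tendsto_lim ⟨-|φ 0| - |c| - c', ?_⟩⟩
  rintro _ ⟨n, rfl⟩
  rcases n.eq_zero_or_pos with rfl | hn
  · simpa using by linarith [abs_nonneg (φ 0), abs_nonneg c]
  have hn1 : (1 : ℝ) ≤ n := Nat.one_le_cast.2 hn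
  change -|φ 0| - |c| - c' ≤ (φ n + c) / n
  rw [le_div_iff₀ (by linarith)]
  nlinarith [(abs_le.1 (abs_sub_le_nat_mul hosc n)).1, neg_abs_le (φ 0), abs_nonneg (φ 0),
    neg_abs_le c, abs_nonneg c]

theorem exists_tendsto_div_of_subadditive {φ : ℝ → ℝ} {c c' : ℝ}
    (hsub : ∀ s t, 0 ≤ s → 0 ≤ t → φ (s + t) ≤ φ s + φ t + c)
    (hosc : ∀ s t, 0 ≤ s → s ≤ t → t ≤ s + 1 → |φ t - φ s| ≤ c') :
    ∃ l, Tendsto (fun t => φ t / t) atTop (𝓝 l) := by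
  obtain ⟨l, hl⟩ := exists_tendsto_nat_div_of_subadditive hsub hosc
  have hmain : Tendsto (fun t : ℝ => (φ ⌊t⌋₊ + c) / ⌊t⌋₊ * (⌊t⌋₊ / t)) atTop (𝓝 (l * 1)) :=
    (hl.comp tendsto_nat_floor_atTop).mul tendsto_nat_floor_div_atTop
  have herr : Tendsto (fun t : ℝ => (φ t - φ ⌊t⌋₊ - c) / t) atTop (𝓝 0) := by
    refine squeeze_zero_norm' (a := fun t => (c' + |c|) / t) ?_
      (tendsto_const_nhds.div_atTop tendsto_id)
    filter_upwards [eventually_gt_atTop 0] with t ht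
    rw [Real.norm_eq_abs, abs_div, abs_of_pos ht]
    gcongr
    exact (abs_sub _ _).trans (add_le_add_left (hosc ⌊t⌋₊ t (Nat.cast_nonneg _)
      (Nat.floor_le ht.le) (Nat.lt_floor_add_one t).le) _)
  refine ⟨l * 1 + 0, (hmain.add herr).congr' ?_⟩
  filter_upwards [eventually_ge_atTop 1] with t ht
  have hfloor : (⌊t⌋₊ : ℝ) ≠ 0 := Nat.cast_ne_zero.2 (Nat.floor_pos.2 ht).ne'
  field_simp
  ring

/-- The gauge `Φ` is bounded by a constant multiple of the gauge `Ψ`, uniformly over all positive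
scales. -/
def DominatedBy (Φ Ψ : ℝ → ℝ≥0∞) : Prop :=
  ∃ C : ℝ≥0∞, C ≠ ∞ ∧ ∀ δ, 0 < δ → Φ δ ≤ C * Ψ δ

namespace DominatedBy

lemma refl (Φ : ℝ → ℝ≥0∞) : DominatedBy Φ Φ := ⟨1, ENNReal.one_ne_top, fun δ _ => by simp⟩

lemma trans {Φ Ψ Θ : ℝ → ℝ≥0∞} (h : DominatedBy Φ Ψ) (h' : DominatedBy Ψ Θ) :
    DominatedBy Φ Θ := by
  obtain ⟨C, hC, h⟩ := h
  obtain ⟨D, hD, h'⟩ := h'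
  refine ⟨C * D, ENNReal.mul_ne_top hC hD, fun δ hδ => ?_⟩
  calc Φ δ ≤ C * Ψ δ := h δ hδ
    _ ≤ C * (D * Θ δ) := by gcongr; exact h' δ hδ
    _ = C * D * Θ δ := (mul_assoc _ _ _).symm

lemma exists_uniform {ι : Type*} [Finite ι] {P : ι → Prop} {Φ Ψ : ι → ℝ → ℝ≥0∞}
    (h : ∀ i, P i → DominatedBy (Φ i) (Ψ i)) :
    ∃ C : ℝ≥0∞, C ≠ ∞ ∧ ∀ i, P i → ∀ δ, 0 < δ → Φ i δ ≤ C * Ψ i δ := by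
  have := Fintype.ofFinite ι
  have h' : ∀ i, ∃ C : ℝ≥0∞, C ≠ ∞ ∧ (P i → ∀ δ, 0 < δ → Φ i δ ≤ C * Ψ i δ) := by
    intro i
    by_cases hi : P i
    · obtain ⟨C, hC, hle⟩ := h i hi
      exact ⟨C, hC, fun _ => hle⟩
    · exact ⟨0, ENNReal.zero_ne_top, fun hi' => absurd hi' hi⟩
  choose C hC hle using h'
  refine ⟨∑ i, C i, ENNReal.sum_ne_top.2 fun i _ => hC i, fun i hi δ hδ => ?_⟩
  refine (hle i hi δ hδ).trans ?_
  gcongr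
  exact Finset.single_le_sum (fun _ _ => zero_le) (Finset.mem_univ i)

end DominatedBy

lemma log_toReal_mul {a b : ℝ≥0∞} (ha : a ≠ 0) (ha' : a ≠ ∞) (hb : b ≠ 0) (hb' : b ≠ ∞) :
    Real.log (a * b).toReal = Real.log a.toReal + Real.log b.toReal := by
  rw [ENNReal.toReal_mul,
    Real.log_mul (ENNReal.toReal_pos ha ha').ne' (ENNReal.toReal_pos hb hb').ne']

lemma log_toReal_le_add {a b C : ℝ≥0∞} (h : a ≤ C * b) (ha : a ≠ 0) (hb : b ≠ ∞) (hC : C ≠ ∞) :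
    Real.log a.toReal ≤ Real.log C.toReal + Real.log b.toReal := by
  have hb0 : b ≠ 0 := fun h0 => ha (by simpa [h0] using h)
  have hC0 : C ≠ 0 := fun h0 => ha (by simpa [h0] using h)
  have hCb : C * b ≠ ∞ := ENNReal.mul_ne_top hC hb
  rw [← log_toReal_mul hC0 hC hb0 hb]
  exact Real.log_le_log (ENNReal.toReal_pos ha (ne_top_of_le_ne_top hCb h))
    (ENNReal.toReal_mono hCb h)

lemma tendsto_neg_log_nhdsGT_zero : Tendsto (fun δ : ℝ => -Real.log δ) (𝓝[>] 0) atTop :=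
  tendsto_neg_atBot_atTop.comp Real.tendsto_log_nhdsGT_zero

/-- `Φ δ` behaves like `δ ^ (-s)` as `δ → 0`, on the logarithmic scale. -/
def HasScalingExponent (Φ : ℝ → ℝ≥0∞) (s : ℝ) : Prop :=
  Tendsto (fun δ => Real.log (Φ δ).toReal / -Real.log δ) (𝓝[>] 0) (𝓝 s)

namespace HasScalingExponent

variable {Φ Ψ : ℝ → ℝ≥0∞} {s : ℝ}

lemma of_abs_log_sub_le (h : HasScalingExponent Φ s) {c : ℝ}
    (hc : ∀ δ, 0 < δ → |Real.log (Ψ δ).toReal - Real.log (Φ δ).toReal| ≤ c) :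
    HasScalingExponent Ψ s := by
  have hdiff : Tendsto (fun δ => (Real.log (Ψ δ).toReal - Real.log (Φ δ).toReal) / -Real.log δ)
      (𝓝[>] 0) (𝓝 0) := by
    refine squeeze_zero_norm' (a := fun δ => c / -Real.log δ) ?_
      (tendsto_const_nhds.div_atTop tendsto_neg_log_nhdsGT_zero)
    filter_upwards [tendsto_neg_log_nhdsGT_zero.eventually_gt_atTop 0, self_mem_nhdsWithin]
      with δ hlog hδ
    rw [Real.norm_eq_abs, abs_div, abs_of_pos hlog]
    gcongr
    exact hc δ hδ
  unfold HasScalingExponent at *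
  simpa [← add_div] using h.add hdiff

lemma of_dominatedBy (h : HasScalingExponent Φ s) (h0 : ∀ δ, 0 < δ → Φ δ ≠ 0)
    (htop : ∀ δ, 0 < δ → Φ δ ≠ ∞) (hΨΦ : DominatedBy Ψ Φ) (hΦΨ : DominatedBy Φ Ψ) :
    HasScalingExponent Ψ s := by
  obtain ⟨C, hC, hΨΦ⟩ := hΨΦ
  obtain ⟨D, hD, hΦΨ⟩ := hΦΨ
  refine h.of_abs_log_sub_le (c := max (Real.log C.toReal) (Real.log D.toReal)) fun δ hδ => ?_
  have hΨ0 : Ψ δ ≠ 0 := fun hz => h0 δ hδ (by simpa [hz] using hΦΨ δ hδ)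
  have hΨtop : Ψ δ ≠ ∞ := ne_top_of_le_ne_top (ENNReal.mul_ne_top hC (htop δ hδ)) (hΨΦ δ hδ)
  have hupper := log_toReal_le_add (hΨΦ δ hδ) hΨ0 (htop δ hδ) hC
  have hlower := log_toReal_le_add (hΦΨ δ hδ) (h0 δ hδ) hΨtop hD
  rw [abs_le]
  constructor
  · linarith [le_max_right (Real.log C.toReal) (Real.log D.toReal)]
  · linarith [le_max_left (Real.log C.toReal) (Real.log D.toReal)]

lemma of_ofReal_mul (h : HasScalingExponent (fun δ => ENNReal.ofReal δ * Φ δ) s)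
    (h0 : ∀ δ, 0 < δ → Φ δ ≠ 0) (htop : ∀ δ, 0 < δ → Φ δ ≠ ∞) :
    HasScalingExponent Φ (s + 1) := by
  refine (Filter.Tendsto.add_const 1 h).congr' ?_
  filter_upwards [tendsto_neg_log_nhdsGT_zero.eventually_gt_atTop 0, self_mem_nhdsWithin]
    with δ hlog hδ
  rw [log_toReal_mul (ENNReal.ofReal_pos.2 hδ).ne' ENNReal.ofReal_ne_top (h0 δ hδ) (htop δ hδ),
    ENNReal.toReal_ofReal hδ.le, div_add_one hlog.ne']
  congr 1
  ring

end HasScalingExponent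

/-- The regularity shared by the moments of a finite measure with bounded support: `Φ` is monotone,
finite, nonzero at positive scales, and a fixed change of scale costs at most a constant factor. -/
structure IsDoublingGauge (Φ : ℝ → ℝ≥0∞) : Prop where
  mono : Monotone Φ
  ne_zero : ∀ δ, 0 < δ → Φ δ ≠ 0
  ne_top : ∀ δ, Φ δ ≠ ∞
  doubling : ∀ L : ℝ, DominatedBy (fun δ => Φ (L * δ)) Φ

namespace IsDoublingGauge

variable {Φ : ℝ → ℝ≥0∞}

lemma exists_abs_log_sub_le (hΦ : IsDoublingGauge Φ) :
    ∃ c, ∀ s t, s ≤ t → t ≤ s + 1 → |Real.log (Φ (Real.exp (-t))).toReal -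
      Real.log (Φ (Real.exp (-s))).toReal| ≤ c := by
  obtain ⟨C, hC, hle⟩ := hΦ.doubling (Real.exp 1)
  refine ⟨Real.log C.toReal, fun s t hst hts => ?_⟩
  have h0 : ∀ t, Φ (Real.exp (-t)) ≠ 0 := fun t => hΦ.ne_zero _ (Real.exp_pos _)
  have hanti : Φ (Real.exp (-t)) ≤ Φ (Real.exp (-s)) := hΦ.mono (by gcongr)
  have hdoub : Φ (Real.exp (-s)) ≤ C * Φ (Real.exp (-t)) := by
    refine le_trans (hΦ.mono ?_) (hle _ (Real.exp_pos _))
    rw [← Real.exp_add]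
    gcongr
    linarith
  have hlog := Real.log_le_log (ENNReal.toReal_pos (h0 t) (hΦ.ne_top _))
    (ENNReal.toReal_mono (hΦ.ne_top _) hanti)
  rw [abs_of_nonpos (by linarith)]
  linarith [log_toReal_le_add hdoub (h0 s) (hΦ.ne_top _) hC]

lemma hasScalingExponent_of_tendsto {l : ℝ}
    (h : Tendsto (fun t => Real.log (Φ (Real.exp (-t))).toReal / t) atTop (𝓝 l)) :
    HasScalingExponent Φ l := by
  refine (h.comp tendsto_neg_log_nhdsGT_zero).congr' ?_
  filter_upwards [self_mem_nhdsWithin] with δ hδ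
  simp [Real.exp_log hδ]

lemma log_toReal_mul_exp (hΦ : IsDoublingGauge Φ) (s t : ℝ) :
    Real.log (Φ (Real.exp (-s)) * Φ (Real.exp (-t))).toReal =
      Real.log (Φ (Real.exp (-s))).toReal + Real.log (Φ (Real.exp (-t))).toReal :=
  log_toReal_mul (hΦ.ne_zero _ (Real.exp_pos _)) (hΦ.ne_top _) (hΦ.ne_zero _ (Real.exp_pos _))
    (hΦ.ne_top _)

theorem exists_hasScalingExponent_of_submultiplicative (hΦ : IsDoublingGauge Φ) {C : ℝ≥0∞}
    (hC : C ≠ ∞) (hmul : ∀ ε ∈ Ioc (0 : ℝ) 1, ∀ δ ∈ Ioc (0 : ℝ) 1, Φ (ε * δ) ≤ C * (Φ ε * Φ δ)) :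
    ∃ s, HasScalingExponent Φ s := by
  obtain ⟨c, hosc⟩ := hΦ.exists_abs_log_sub_le
  suffices hsub : ∀ s t, 0 ≤ s → 0 ≤ t → Real.log (Φ (Real.exp (-(s + t)))).toReal ≤
      Real.log (Φ (Real.exp (-s))).toReal + Real.log (Φ (Real.exp (-t))).toReal +
        Real.log C.toReal from
    (exists_tendsto_div_of_subadditive hsub fun s t _ => hosc s t).imp
      fun l hl => hasScalingExponent_of_tendsto hl
  intro s t hs ht
  have h := log_toReal_le_add
    (hmul _ ⟨Real.exp_pos _, Real.exp_le_one_iff.2 (neg_nonpos.2 hs)⟩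
      _ ⟨Real.exp_pos _, Real.exp_le_one_iff.2 (neg_nonpos.2 ht)⟩)
    (hΦ.ne_zero _ (mul_pos (Real.exp_pos _) (Real.exp_pos _)))
    (ENNReal.mul_ne_top (hΦ.ne_top _) (hΦ.ne_top _)) hC
  rw [hΦ.log_toReal_mul_exp, ← Real.exp_add, ← neg_add] at h
  linarith

theorem exists_hasScalingExponent_of_supermultiplicative (hΦ : IsDoublingGauge Φ) {C : ℝ≥0∞}
    (hC : C ≠ ∞) (hmul : ∀ ε ∈ Ioc (0 : ℝ) 1, ∀ δ ∈ Ioc (0 : ℝ) 1, Φ ε * Φ δ ≤ C * Φ (ε * δ)) :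
    ∃ s, HasScalingExponent Φ s := by
  obtain ⟨c, hosc⟩ := hΦ.exists_abs_log_sub_le
  have hosc_neg : ∀ s t, 0 ≤ s → s ≤ t → t ≤ s + 1 →
      |-Real.log (Φ (Real.exp (-t))).toReal - -Real.log (Φ (Real.exp (-s))).toReal| ≤ c := by
    intro s t _ hst hts
    rw [neg_sub_neg, abs_sub_comm]
    exact hosc s t hst hts
  suffices hsub : ∀ s t, 0 ≤ s → 0 ≤ t → -Real.log (Φ (Real.exp (-(s + t)))).toReal ≤
      -Real.log (Φ (Real.exp (-s))).toReal + -Real.log (Φ (Real.exp (-t))).toReal +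
        Real.log C.toReal by
    obtain ⟨l, hl⟩ := exists_tendsto_div_of_subadditive hsub hosc_neg
    exact ⟨-l, hasScalingExponent_of_tendsto (by simpa [neg_div] using hl.neg)⟩
  intro s t hs ht
  have h := log_toReal_le_add
    (hmul _ ⟨Real.exp_pos _, Real.exp_le_one_iff.2 (neg_nonpos.2 hs)⟩
      _ ⟨Real.exp_pos _, Real.exp_le_one_iff.2 (neg_nonpos.2 ht)⟩)
    (mul_ne_zero (hΦ.ne_zero _ (Real.exp_pos _)) (hΦ.ne_zero _ (Real.exp_pos _)))
    (hΦ.ne_top _) hC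
  rw [hΦ.log_toReal_mul_exp, ← Real.exp_add, ← neg_add] at h
  linarith

end IsDoublingGauge

/-! ### Moments over balls -/

section BallMoment

variable {E : Type*} [PseudoMetricSpace E] [MeasureSpace E]

/-- The continuous moment `∫ ν(B(x, δ)) ^ q dx` of order `q` at scale `δ`. Unlike the mesh sums it
is compatible with isometries and with the change of scale by a similarity. -/
noncomputable def ballMoment (ν : Measure E) (q δ : ℝ) : ℝ≥0∞ :=
  ∫⁻ x, powPos q (ν (closedBall x δ))

lemma ballMoment_mono (ν : Measure E) {q : ℝ} (hq : 0 ≤ q) : Monotone (ballMoment ν q) :=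
  fun _ _ h => lintegral_mono fun _ =>
    powPos_mono hq (measure_mono (closedBall_subset_closedBall h))

lemma ballMoment_mono_measure {ν ν' : Measure E} (h : ν ≤ ν') {q : ℝ} (hq : 0 ≤ q) (δ : ℝ) :
    ballMoment ν q δ ≤ ballMoment ν' q δ :=
  lintegral_mono fun _ => powPos_mono hq (h _)

variable [SecondCountableTopology E] [OpensMeasurableSpace E]

lemma measurableSet_dist_le (c : ℝ) : MeasurableSet {z : E × E | dist z.2 z.1 ≤ c} :=
  measurableSet_le (by fun_prop) (by fun_prop)

lemma measurable_measure_closedBall (ν : Measure E) [SFinite ν] (δ : ℝ) :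
    Measurable fun x => ν (closedBall x δ) :=
  measurable_measure_prodMk_left (measurableSet_dist_le δ)

lemma measurable_powPos_measure_closedBall (ν : Measure E) [SFinite ν] (q δ : ℝ) :
    Measurable fun x => powPos q (ν (closedBall x δ)) :=
  (measurable_powPos q).comp (measurable_measure_closedBall ν δ)

lemma ballMoment_smul (ν : Measure E) [SFinite ν] (c : ℝ≥0∞) {q : ℝ} (hq : 0 ≤ q) (δ : ℝ) :
    ballMoment (c • ν) q δ = powPos q c * ballMoment ν q δ := by
  simp only [ballMoment, Measure.smul_apply, smul_eq_mul, powPos_mul hq]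
  exact lintegral_const_mul _ (measurable_powPos_measure_closedBall ν q δ)

end BallMoment

lemma exists_finset_closedBall_subset {E : Type*} [NormedAddCommGroup E] [NormedSpace ℝ E]
    [ProperSpace E] (L : ℝ) :
    ∃ t : Finset E, ∀ x : E, ∀ δ, 0 < δ →
      closedBall x (L * δ) ⊆ ⋃ c ∈ t, closedBall (x + δ • c) δ := by
  obtain ⟨t, -, htfin, ht⟩ :=
    (isCompact_closedBall (0 : E) L).finite_cover_balls (one_pos : (0 : ℝ) < 1)
  refine ⟨htfin.toFinset, fun x δ hδ y hy => ?_⟩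
  have hmem : δ⁻¹ • (y - x) ∈ closedBall (0 : E) L := by
    rw [mem_closedBall_zero_iff, norm_smul, norm_inv, Real.norm_of_nonneg hδ.le,
      inv_mul_le_iff₀ hδ, mul_comm, ← dist_eq_norm]
    exact hy
  obtain ⟨c, hc, hdist⟩ := mem_iUnion₂.1 (ht hmem)
  refine mem_iUnion₂.2 ⟨c, htfin.mem_toFinset.2 hc, ?_⟩
  have hscale : y - (x + δ • c) = δ • (δ⁻¹ • (y - x) - c) := by
    rw [smul_sub, smul_inv_smul₀ hδ.ne']
    abel
  rw [mem_ball, dist_eq_norm] at hdist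
  rw [mem_closedBall, dist_eq_norm, hscale, norm_smul, Real.norm_of_nonneg hδ.le]
  exact mul_le_of_le_one_right hδ.le hdist.le

section Haar

variable {E : Type*} [NormedAddCommGroup E] [NormedSpace ℝ E] [FiniteDimensional ℝ E]
  [MeasureSpace E] [BorelSpace E] [(volume : Measure E).IsAddHaarMeasure]

lemma lintegral_setLIntegral_closedBall (ν : Measure E) [SFinite ν] {G : E → ℝ≥0∞}
    (hG : Measurable G) (c : ℝ) :
    ∫⁻ z, ∫⁻ x in closedBall z c, G x ∂ν = volume (closedBall (0 : E) c) * ∫⁻ x, G x ∂ν := by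
  have hm : Measurable fun y : E × E => (closedBall y.1 c).indicator G y.2 :=
    (hG.comp measurable_snd).indicator (measurableSet_dist_le c)
  simp only [← lintegral_indicator measurableSet_closedBall]
  rw [lintegral_lintegral_swap hm.aemeasurable, ← lintegral_const_mul _ hG]
  refine lintegral_congr fun x => ?_
  have hsymm : (fun z => (closedBall z c).indicator G x) =
      (closedBall x c).indicator fun _ => G x := by
    ext z
    simp only [indicator, mem_closedBall, dist_comm]
  rw [hsymm, lintegral_indicator_const measurableSet_closedBall,
    Measure.addHaar_closedBall_center, mul_comm]

lemma lintegral_measure_closedBall (ν : Measure E) [SFinite ν] (δ : ℝ) :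
    ∫⁻ x, ν (closedBall x δ) = volume (closedBall (0 : E) δ) * ν univ := by
  simpa using lintegral_setLIntegral_closedBall ν measurable_one δ

lemma ballMoment_ne_zero {ν : Measure E} [SFinite ν] (hν : ν ≠ 0) {q : ℝ} (hq : 0 ≤ q) {δ : ℝ}
    (hδ : 0 < δ) : ballMoment ν q δ ≠ 0 := by
  intro h0
  rw [ballMoment, lintegral_eq_zero_iff (measurable_powPos_measure_closedBall ν q δ)] at h0
  have hball : (fun x => ν (closedBall x δ)) =ᵐ[volume] 0 := by
    filter_upwards [h0] with x hx
    by_contra hne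
    exact powPos_ne_zero hq hne hx
  have hint := lintegral_measure_closedBall ν δ
  rw [(lintegral_eq_zero_iff (measurable_measure_closedBall ν δ)).2 hball] at hint
  exact mul_ne_zero (measure_closedBall_pos volume 0 hδ).ne'
    (Measure.measure_univ_ne_zero.2 hν) hint.symm

lemma ballMoment_ne_top (ν : Measure E) [IsFiniteMeasure ν] {q : ℝ} (hq : 0 ≤ q) {R : ℝ}
    (hR : ν (closedBall 0 R)ᶜ = 0) (δ : ℝ) : ballMoment ν q δ ≠ ∞ := by
  have hle : ∀ x, powPos q (ν (closedBall x δ)) ≤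
      (closedBall (0 : E) (R + δ)).indicator (fun _ => powPos q (ν univ)) x := by
    intro x
    by_cases hx : x ∈ closedBall (0 : E) (R + δ)
    · rw [indicator_of_mem hx]
      exact powPos_mono hq (measure_mono (subset_univ _))
    · have hdisj : Disjoint (closedBall x δ) (closedBall 0 R) :=
        closedBall_disjoint_closedBall (by simpa [add_comm] using hx)
      rw [measure_mono_null hdisj.subset_compl_right hR, powPos_zero]
      exact zero_le
  refine ne_top_of_le_ne_top ?_ (lintegral_mono hle)
  rw [lintegral_indicator_const measurableSet_closedBall]
  exact ENNReal.mul_ne_top (powPos_ne_top hq (measure_ne_top ν _)) measure_closedBall_lt_top.ne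

lemma dominatedBy_ballMoment_mul (ν : Measure E) [SFinite ν] {q : ℝ} (hq : 0 ≤ q) (L : ℝ) :
    DominatedBy (fun δ => ballMoment ν q (L * δ)) (ballMoment ν q) := by
  obtain ⟨t, ht⟩ := exists_finset_closedBall_subset (E := E) L
  refine ⟨powPos q t.card * t.card, ENNReal.mul_ne_top
    (powPos_ne_top hq (ENNReal.natCast_ne_top _)) (ENNReal.natCast_ne_top _), fun δ hδ => ?_⟩
  have hshift : ∀ c : E, Measurable fun x => powPos q (ν (closedBall (x + δ • c) δ)) := fun c =>
    (measurable_powPos_measure_closedBall ν q δ).comp (measurable_add_const _)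
  calc ballMoment ν q (L * δ)
      ≤ ∫⁻ x, powPos q t.card * ∑ c ∈ t, powPos q (ν (closedBall (x + δ • c) δ)) :=
        lintegral_mono fun x => (powPos_mono hq ((measure_mono (ht x δ hδ)).trans
          (measure_biUnion_finset_le t _))).trans (powPos_sum_le_card t hq _)
    _ = powPos q t.card * ∑ _c ∈ t, ballMoment ν q δ := by
        rw [lintegral_const_mul _ (Finset.measurable_fun_sum t fun c _ => hshift c),
          lintegral_finsetSum t fun c _ => hshift c]
        simp only [lintegral_add_right_eq_self fun x => powPos q (ν (closedBall x δ))]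
        rfl
    _ = powPos q t.card * t.card * ballMoment ν q δ := by
        rw [Finset.sum_const, nsmul_eq_mul, mul_assoc]

lemma isDoublingGauge_ballMoment {ν : Measure E} [IsFiniteMeasure ν] (hν : ν ≠ 0) {R : ℝ}
    (hR : ν (closedBall 0 R)ᶜ = 0) {q : ℝ} (hq : 0 ≤ q) : IsDoublingGauge (ballMoment ν q) where
  mono := ballMoment_mono ν hq
  ne_zero _ hδ := ballMoment_ne_zero hν hq hδ
  ne_top := ballMoment_ne_top ν hq hR
  doubling := dominatedBy_ballMoment_mul ν hq

end Haar

/-! ### Similarities -/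

section Dilation

lemma hausdorffMeasure_image_dilationEquiv {X : Type*} [MetricSpace X] [MeasurableSpace X]
    [BorelSpace X] (f : X ≃ᵈ X) {d : ℝ} (hd : 0 ≤ d) (s : Set X) :
    μH[d] (f '' s) = (Dilation.ratio f : ℝ≥0∞) ^ d * μH[d] s := by
  refine le_antisymm ((Dilation.lipschitz f).hausdorffMeasure_image_le hd s) ?_
  have hr : (Dilation.ratio f : ℝ≥0∞) ≠ 0 := ENNReal.coe_ne_zero.2 (Dilation.ratio_ne_zero f)
  have hle := (Dilation.antilipschitz f).le_hausdorffMeasure_image hd s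
  rw [ENNReal.coe_inv (Dilation.ratio_ne_zero f), ENNReal.inv_rpow] at hle
  rwa [mul_comm, ← ENNReal.le_div_iff_mul_le, ENNReal.div_eq_inv_mul]
  · simp [hr, hd.not_gt]
  · simp [hd.not_gt]

lemma preimage_closedBall_dilationEquiv {X : Type*} [PseudoMetricSpace X] (f : X ≃ᵈ X) (x : X)
    (δ : ℝ) : f ⁻¹' closedBall x δ = closedBall (f.symm x) (δ / Dilation.ratio f) := by
  ext y
  rw [mem_preimage, mem_closedBall, mem_closedBall,
    le_div_iff₀' (NNReal.coe_pos.2 (Dilation.ratio_pos f)), ← Dilation.dist_eq,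
    DilationEquiv.apply_symm_apply]

lemma map_dilationEquiv_compl_closedBall_eq_zero {X : Type*} [PseudoMetricSpace X]
    [MeasurableSpace X] [BorelSpace X] {ν : Measure X} {x : X} {R a : ℝ}
    (hν : ν (closedBall x R)ᶜ = 0) (f : X ≃ᵈ X) (ha : Dilation.ratio f * R ≤ a) :
    ν.map f (closedBall (f x) a)ᶜ = 0 := by
  have hf : Measurable f := f.toHomeomorph.measurable
  rw [Measure.map_apply hf measurableSet_closedBall.compl, preimage_compl,
    preimage_closedBall_dilationEquiv, DilationEquiv.symm_apply_apply]
  refine measure_mono_null (compl_subset_compl.2 (closedBall_subset_closedBall ?_)) hν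
  rwa [le_div_iff₀' (NNReal.coe_pos.2 (Dilation.ratio_pos f))]

open Module (finrank)

variable {E : Type*} [NormedAddCommGroup E] [NormedSpace ℝ E] [FiniteDimensional ℝ E]
  [MeasureSpace E] [BorelSpace E] [(volume : Measure E).IsAddHaarMeasure]

lemma volume_image_dilationEquiv (f : E ≃ᵈ E) (s : Set E) :
    volume (f '' s) = (Dilation.ratio f : ℝ≥0∞) ^ finrank ℝ E * volume s := by
  have hvol : (volume : Measure E) = Measure.addHaarScalarFactor volume μH[finrank ℝ E] •
      μH[finrank ℝ E] := Measure.isAddLeftInvariant_eq_smul _ _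
  rw [hvol]
  simp only [Measure.smul_apply, hausdorffMeasure_image_dilationEquiv f (Nat.cast_nonneg _),
    ENNReal.rpow_natCast, mul_smul_comm]

lemma lintegral_comp_dilationEquiv_symm (f : E ≃ᵈ E) (G : E → ℝ≥0∞) :
    ∫⁻ x, G (f.symm x) = (Dilation.ratio f : ℝ≥0∞) ^ finrank ℝ E * ∫⁻ x, G x := by
  have hmap : Measure.map f.symm.toHomeomorph.toMeasurableEquiv (volume : Measure E) =
      (Dilation.ratio f : ℝ≥0∞) ^ finrank ℝ E • volume := by
    ext s -
    rw [MeasurableEquiv.map_apply, Measure.smul_apply, smul_eq_mul,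
      ← volume_image_dilationEquiv]
    congr 1
    exact (f.toEquiv.image_eq_preimage_symm s).symm
  rw [← smul_eq_mul, ← lintegral_smul_measure, ← hmap, lintegral_map_equiv]
  rfl

lemma ballMoment_map_dilationEquiv (ν : Measure E) (f : E ≃ᵈ E) (q δ : ℝ) :
    ballMoment (ν.map f) q δ =
      (Dilation.ratio f : ℝ≥0∞) ^ finrank ℝ E * ballMoment ν q (δ / Dilation.ratio f) := by
  have hf : Measurable f := f.toHomeomorph.measurable
  simp only [ballMoment, Measure.map_apply hf measurableSet_closedBall,
    preimage_closedBall_dilationEquiv]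
  exact lintegral_comp_dilationEquiv_symm f fun x =>
    powPos q (ν (closedBall x (δ / Dilation.ratio f)))

variable {ρ ε δ q : ℝ} {f : E ≃ᵈ E}

lemma ballMoment_map_dilationEquiv_le (ν : Measure E) (hq : 0 ≤ q) (hρ : 0 < ρ) (hδ : 0 ≤ δ)
    (hle : ρ * ε ≤ Dilation.ratio f) (hge : Dilation.ratio f ≤ ε) :
    ballMoment (ν.map f) q (ε * δ) ≤
      ENNReal.ofReal (ε ^ finrank ℝ E) * ballMoment ν q (ρ⁻¹ * δ) := by
  have hf : (0 : ℝ) < Dilation.ratio f := Dilation.ratio_pos f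
  rw [ballMoment_map_dilationEquiv, ENNReal.ofReal_pow (hf.le.trans hge)]
  gcongr
  · exact ENNReal.ofReal_coe_nnreal ▸ ENNReal.ofReal_le_ofReal hge
  · refine ballMoment_mono ν hq ?_
    rw [div_le_iff₀ hf, inv_mul_eq_div, div_mul_eq_mul_div, le_div_iff₀ hρ]
    linear_combination δ * hle

lemma le_ballMoment_map_dilationEquiv (ν : Measure E) (hq : 0 ≤ q) (hρε : 0 ≤ ρ * ε) (hδ : 0 ≤ δ)
    (hle : ρ * ε ≤ Dilation.ratio f) (hge : Dilation.ratio f ≤ ε) :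
    ENNReal.ofReal ((ρ * ε) ^ finrank ℝ E) * ballMoment ν q δ ≤ ballMoment (ν.map f) q (ε * δ) := by
  have hf : (0 : ℝ) < Dilation.ratio f := Dilation.ratio_pos f
  rw [ballMoment_map_dilationEquiv, ENNReal.ofReal_pow hρε]
  gcongr
  · exact ENNReal.ofReal_coe_nnreal ▸ ENNReal.ofReal_le_ofReal hle
  · refine ballMoment_mono ν hq ?_
    rw [le_div_iff₀ hf]
    linear_combination δ * hge

end Dilation

/-! ### Mixtures of localized measures -/

section Mixture

lemma measure_closedBall_eq_zero_of_lt_dist {E : Type*} [PseudoMetricSpace E] [MeasurableSpace E]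
    {π : Measure E} {c x : E} {r η : ℝ} (hπ : π (closedBall c r)ᶜ = 0) (hx : η + r < dist c x) :
    π (closedBall x η) = 0 := by
  have hdisj : Disjoint (closedBall x η) (closedBall c r) :=
    closedBall_disjoint_closedBall (by rwa [dist_comm])
  exact measure_mono_null hdisj.subset_compl_right hπ

lemma measure_closedBall_eq_one_of_dist_le {E : Type*} [PseudoMetricSpace E] [MeasurableSpace E]
    [OpensMeasurableSpace E] {π : Measure E} [IsProbabilityMeasure π] {c x : E} {r η : ℝ}
    (hπ : π (closedBall c r)ᶜ = 0) (hx : dist c x + r ≤ η) : π (closedBall x η) = 1 := by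
  rw [← prob_compl_eq_zero_iff measurableSet_closedBall]
  exact measure_mono_null
    (compl_subset_compl.2 (closedBall_subset_closedBall' (by rwa [add_comm]))) hπ

variable {J E : Type*} [MeasureSpace E] {q : ℝ} {w : J → ℝ≥0∞} {π : J → Measure E}

section Jensen

variable [PseudoMetricSpace E] [SecondCountableTopology E] [OpensMeasurableSpace E]
  [∀ k, SFinite (π k)] {s : Finset J} {η : ℝ}

lemma ballMoment_sum_smul_le (hq : 1 ≤ q) (hw : ∑ k ∈ s, w k ≠ ∞) {M : ℝ≥0∞}
    (hM : ∀ k ∈ s, ballMoment (π k) q η ≤ M) :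
    ballMoment (∑ k ∈ s, w k • π k) q η ≤ powPos q (∑ k ∈ s, w k) * M := by
  have hmeas : ∀ k, Measurable fun x => powPos q (π k (closedBall x η)) := fun k =>
    measurable_powPos_measure_closedBall (π k) q η
  calc ballMoment (∑ k ∈ s, w k • π k) q η
      ≤ ∫⁻ x, (∑ k ∈ s, w k) ^ (q - 1) * ∑ k ∈ s, w k * powPos q (π k (closedBall x η)) := by
        refine lintegral_mono fun x => ?_
        simpa using powPos_sum_mul_le s hq w fun k => π k (closedBall x η)
    _ = (∑ k ∈ s, w k) ^ (q - 1) * ∑ k ∈ s, w k * ballMoment (π k) q η := by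
        rw [lintegral_const_mul _ (by fun_prop), lintegral_finsetSum _ (by fun_prop)]
        simp only [lintegral_const_mul _ (hmeas _), ballMoment]
    _ ≤ (∑ k ∈ s, w k) ^ (q - 1) * ((∑ k ∈ s, w k) * M) := by
        rw [Finset.sum_mul]
        gcongr with k hk
        exact hM k hk
    _ = powPos q (∑ k ∈ s, w k) * M := by rw [← mul_assoc, rpow_sub_one_mul_self q hw]

lemma le_ballMoment_sum_smul (hq0 : 0 ≤ q) (hq1 : q ≤ 1) (hw : ∑ k ∈ s, w k ≠ ∞) {m : ℝ≥0∞}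
    (hm : ∀ k ∈ s, m ≤ ballMoment (π k) q η) :
    powPos q (∑ k ∈ s, w k) * m ≤ ballMoment (∑ k ∈ s, w k • π k) q η := by
  have hmeas : ∀ k, Measurable fun x => powPos q (π k (closedBall x η)) := fun k =>
    measurable_powPos_measure_closedBall (π k) q η
  calc powPos q (∑ k ∈ s, w k) * m
      = (∑ k ∈ s, w k) ^ (q - 1) * ((∑ k ∈ s, w k) * m) := by
        rw [← mul_assoc, rpow_sub_one_mul_self q hw]
    _ ≤ (∑ k ∈ s, w k) ^ (q - 1) * ∑ k ∈ s, w k * ballMoment (π k) q η := by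
        rw [Finset.sum_mul]
        gcongr with k hk
        exact hm k hk
    _ = ∫⁻ x, (∑ k ∈ s, w k) ^ (q - 1) * ∑ k ∈ s, w k * powPos q (π k (closedBall x η)) := by
        rw [lintegral_const_mul _ (by fun_prop), lintegral_finsetSum _ (by fun_prop)]
        simp only [lintegral_const_mul _ (hmeas _), ballMoment]
    _ ≤ ballMoment (∑ k ∈ s, w k • π k) q η := by
        refine lintegral_mono fun x => ?_
        simpa using le_powPos_sum_mul s hq0 hq1 w (fun k => π k (closedBall x η)) hw

end Jensen

variable [Fintype J] {c : J → E} {r : ℝ}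

section Near

variable [PseudoMetricSpace E]

lemma sum_smul_near_apply_closedBall (hπ : ∀ k, π k (closedBall (c k) r)ᶜ = 0) {x z : E}
    {η a : ℝ} (hx : dist x z + η + r ≤ a) :
    (∑ k with dist (c k) z ≤ a, w k • π k) (closedBall x η) =
      (∑ k, w k • π k) (closedBall x η) := by
  simp only [Measure.coe_finsetSum, Finset.sum_apply, Measure.smul_apply, smul_eq_mul]
  refine Finset.sum_filter_of_ne fun k _ hk => ?_
  by_contra! hfar
  refine hk ?_
  rw [measure_closedBall_eq_zero_of_lt_dist (hπ k), mul_zero]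
  linarith [dist_triangle (c k) x z]

lemma sum_smul_near_apply_closedBall_eq_zero (hπ : ∀ k, π k (closedBall (c k) r)ᶜ = 0) {x z : E}
    {η a : ℝ} (hx : a + η + r < dist x z) :
    (∑ k with dist (c k) z ≤ a, w k • π k) (closedBall x η) = 0 := by
  simp only [Measure.coe_finsetSum, Finset.sum_apply, Measure.smul_apply, smul_eq_mul]
  refine Finset.sum_eq_zero fun k hk => ?_
  have hnear : dist (c k) z ≤ a := (Finset.mem_filter.1 hk).2
  rw [measure_closedBall_eq_zero_of_lt_dist (hπ k), mul_zero]
  linarith [dist_triangle_left x z (c k)]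

variable [∀ k, IsProbabilityMeasure (π k)]

lemma measure_closedBall_le_sum_near (hπ : ∀ k, π k (closedBall (c k) r)ᶜ = 0) (z : E) (a : ℝ) :
    (∑ k, w k • π k) (closedBall z a) ≤ ∑ k with dist (c k) z ≤ a + r, w k := by
  simp only [Measure.coe_finsetSum, Finset.sum_apply, Measure.smul_apply, smul_eq_mul]
  rw [Finset.sum_filter]
  refine Finset.sum_le_sum fun k _ => ?_
  split_ifs with hk
  · exact mul_le_of_le_one_right' prob_le_one
  · rw [measure_closedBall_eq_zero_of_lt_dist (hπ k) (not_le.1 hk), mul_zero]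

lemma sum_near_le_measure_closedBall [OpensMeasurableSpace E]
    (hπ : ∀ k, π k (closedBall (c k) r)ᶜ = 0) (z : E) (a : ℝ) :
    ∑ k with dist (c k) z ≤ a, w k ≤ (∑ k, w k • π k) (closedBall z (a + r)) := by
  simp only [Measure.coe_finsetSum, Finset.sum_apply, Measure.smul_apply, smul_eq_mul]
  rw [Finset.sum_filter]
  refine Finset.sum_le_sum fun k _ => ?_
  split_ifs with hk
  · rw [measure_closedBall_eq_one_of_dist_le (hπ k) (by gcongr), mul_one]
  · exact zero_le

end Near

lemma sum_ne_top_of_eq_sum_smul [∀ k, IsProbabilityMeasure (π k)] {ν : Measure E}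
    [IsFiniteMeasure ν] (hν : ν = ∑ k, w k • π k) : ∑ k, w k ≠ ∞ := by
  have huniv : ν univ = ∑ k, w k := by simp [hν]
  exact huniv ▸ measure_ne_top ν univ

variable [NormedAddCommGroup E] [NormedSpace ℝ E] [FiniteDimensional ℝ E] [BorelSpace E]
  [(volume : Measure E).IsAddHaarMeasure] [∀ k, IsProbabilityMeasure (π k)]
  {ν : Measure E} [IsFiniteMeasure ν]

-- Averaging over windows `closedBall z s` localizes the mixture: in a window, only the pieces
-- centred near `z` matter, and their total weight is at most the mass of a slightly larger window.
lemma ballMoment_sum_smul_le_of_uniform_le (hq : 1 ≤ q) (hν : ν = ∑ k, w k • π k)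
    (hπ : ∀ k, π k (closedBall (c k) r)ᶜ = 0) (s : ℝ) {η : ℝ} {M : ℝ≥0∞}
    (hM : ∀ k, ballMoment (π k) q η ≤ M) :
    volume (closedBall (0 : E) s) * ballMoment ν q η ≤
      ballMoment ν q (s + η + 2 * r) * M := by
  have hq0 : 0 ≤ q := zero_le_one.trans hq
  have hw : ∑ k, w k ≠ ∞ := sum_ne_top_of_eq_sum_smul hν
  set a : ℝ := s + η + r
  calc volume (closedBall (0 : E) s) * ballMoment ν q η
      = ∫⁻ z, ∫⁻ x in closedBall z s, powPos q (ν (closedBall x η)) :=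
        (lintegral_setLIntegral_closedBall volume
          (measurable_powPos_measure_closedBall ν q η) s).symm
    _ ≤ ∫⁻ z, ballMoment (∑ k with dist (c k) z ≤ a, w k • π k) q η := by
        refine lintegral_mono fun z => ?_
        refine le_trans (setLIntegral_mono_ae' measurableSet_closedBall ?_)
          (setLIntegral_le_lintegral (closedBall z s) _)
        refine ae_of_all _ fun x hx => ?_
        rw [sum_smul_near_apply_closedBall hπ, hν]
        simp only [a]
        gcongr
        exact hx
    _ ≤ ∫⁻ z, powPos q (ν (closedBall z (s + η + 2 * r))) * M := by
        refine lintegral_mono fun z => ?_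
        refine (ballMoment_sum_smul_le hq ?_ fun k _ => hM k).trans ?_
        · exact ne_top_of_le_ne_top hw (Finset.sum_le_univ_sum_of_nonneg fun _ => zero_le)
        · gcongr
          refine powPos_mono hq0 ?_
          rw [show s + η + 2 * r = a + r by ring, hν]
          exact sum_near_le_measure_closedBall hπ z a
    _ = ballMoment ν q (s + η + 2 * r) * M :=
        lintegral_mul_const _ (measurable_powPos_measure_closedBall ν q _)

lemma le_ballMoment_sum_smul_of_uniform_le (hq0 : 0 ≤ q) (hq1 : q ≤ 1) (hν : ν = ∑ k, w k • π k)
    (hπ : ∀ k, π k (closedBall (c k) r)ᶜ = 0) (s : ℝ) {η : ℝ} {m : ℝ≥0∞}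
    (hm : ∀ k, m ≤ ballMoment (π k) q η) :
    ballMoment ν q s * m ≤
      volume (closedBall (0 : E) (s + η + 2 * r)) * ballMoment ν q η := by
  have hw : ∑ k, w k ≠ ∞ := sum_ne_top_of_eq_sum_smul hν
  set a : ℝ := s + r
  have hle : ∀ z, (∑ k with dist (c k) z ≤ a, w k • π k) ≤ ν := fun z =>
    hν ▸ Finset.sum_le_univ_sum_of_nonneg fun _ => Measure.zero_le _
  calc ballMoment ν q s * m
      = ∫⁻ z, powPos q (ν (closedBall z s)) * m :=
        (lintegral_mul_const _ (measurable_powPos_measure_closedBall ν q s)).symm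
    _ ≤ ∫⁻ z, ballMoment (∑ k with dist (c k) z ≤ a, w k • π k) q η := by
        refine lintegral_mono fun z => ?_
        refine le_trans ?_ (le_ballMoment_sum_smul hq0 hq1 ?_ fun k _ => hm k)
        · gcongr
          exact powPos_mono hq0 (hν ▸ measure_closedBall_le_sum_near hπ z s)
        · exact ne_top_of_le_ne_top hw (Finset.sum_le_univ_sum_of_nonneg fun _ => zero_le)
    _ ≤ ∫⁻ z, ∫⁻ x in closedBall z (s + η + 2 * r), powPos q (ν (closedBall x η)) := by
        refine lintegral_mono fun z => ?_
        rw [← lintegral_indicator measurableSet_closedBall]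
        refine lintegral_mono fun x => ?_
        by_cases hx : x ∈ closedBall z (s + η + 2 * r)
        · rw [indicator_of_mem hx]
          exact powPos_mono hq0 (hle z _)
        · rw [indicator_of_notMem hx, sum_smul_near_apply_closedBall_eq_zero hπ, powPos_zero]
          linarith [not_le.1 (mt mem_closedBall.2 hx)]
    _ = volume (closedBall (0 : E) (s + η + 2 * r)) * ballMoment ν q η :=
        lintegral_setLIntegral_closedBall volume (measurable_powPos_measure_closedBall ν q η) _

end Mixture

/-! ### Decompositions into similar copies -/

section Decomposition

/-- A decomposition `ν i = ∑ k, w k • (f k)_* ν (tgt k)` of one member of the family `ν` into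
finitely many weighted similar copies of members of the same family. -/
structure Decomposition {I E : Type*} [PseudoMetricSpace E] [MeasurableSpace E]
    (ν : I → Measure E) (i : I) where
  Piece : Type
  fintype : Fintype Piece
  w : Piece → ℝ≥0∞
  w_ne_zero : ∀ k, w k ≠ 0
  tgt : Piece → I
  f : Piece → E ≃ᵈ E
  eq_sum : ν i = ∑ k, w k • (ν (tgt k)).map (f k)

attribute [instance] Decomposition.fintype

namespace Decomposition

open Dilation (ratio)

section Basic

variable {I E : Type*} [PseudoMetricSpace E] [MeasurableSpace E] [BorelSpace E]
  {ν : I → Measure E} {i : I}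

/-- The decomposition of `ν i` into the single piece `ν i`. -/
noncomputable def single (ν : I → Measure E) (i : I) : Decomposition ν i where
  Piece := Unit
  fintype := inferInstance
  w _ := 1
  w_ne_zero _ := one_ne_zero
  tgt _ := i
  f _ := DilationEquiv.refl E
  eq_sum := by simp [DilationEquiv.refl_apply]

/-- The decomposition obtained by decomposing each piece further. -/
noncomputable def refine (D : Decomposition ν i) (D' : ∀ k, Decomposition ν (D.tgt k)) :
    Decomposition ν i where
  Piece := Σ k, (D' k).Piece
  fintype := inferInstance
  w x := D.w x.1 * (D' x.1).w x.2
  w_ne_zero x := mul_ne_zero (D.w_ne_zero _) ((D' x.1).w_ne_zero _)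
  tgt x := (D' x.1).tgt x.2
  f x := ((D' x.1).f x.2).trans (D.f x.1)
  eq_sum := by
    have hf : ∀ f : E ≃ᵈ E, Measurable f := fun f => f.toHomeomorph.measurable
    rw [D.eq_sum, Fintype.sum_sigma]
    refine Finset.sum_congr rfl fun k _ => ?_
    rw [(D' k).eq_sum, Measure.map_finset_sum (hf _).aemeasurable, Finset.smul_sum]
    refine Finset.sum_congr rfl fun j _ => ?_
    rw [Measure.map_smul, Measure.map_map (hf _) (hf _), smul_smul, DilationEquiv.trans_apply]

variable [∀ i, IsProbabilityMeasure (ν i)]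

lemma sum_w (D : Decomposition ν i) :
    ∑ k, D.w k = 1 := by
  have hf : ∀ k, Measurable (D.f k) := fun k => (D.f k).toHomeomorph.measurable
  have huniv : ν i univ = ∑ k, D.w k := by
    nth_rw 1 [D.eq_sum]
    simp [Measure.map_apply (hf _)]
  rw [← huniv, measure_univ]

lemma measure_compl_le_of_mapsTo (D : Decomposition ν i)
    {s t : Set E} (ht : MeasurableSet t) (hst : ∀ k, MapsTo (D.f k) s t) {η : ℝ≥0∞}
    (hη : ∀ j, ν j sᶜ ≤ η) : ν i tᶜ ≤ η := by
  have hf : ∀ k, Measurable (D.f k) := fun k => (D.f k).toHomeomorph.measurable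
  nth_rw 1 [D.eq_sum]
  simp only [Measure.coe_finsetSum, Finset.sum_apply, Measure.smul_apply, smul_eq_mul]
  calc ∑ k, D.w k * (ν (D.tgt k)).map (D.f k) tᶜ ≤ ∑ k, D.w k * η := by
        gcongr with k
        rw [Measure.map_apply (hf k) ht.compl, preimage_compl]
        exact (measure_mono (compl_subset_compl.2 (hst k))).trans (hη _)
    _ = η := by rw [← Finset.sum_mul, D.sum_w, one_mul]

end Basic

section Reach

variable {I E : Type*} [PseudoMetricSpace E] [MeasurableSpace E] {ν : I → Measure E}

/-- `Reach D i j`: the measure `ν j` occurs, up to a similarity, in some iterated decomposition of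
`ν i`. -/
def Reach (D : ∀ i, Decomposition ν i) : I → I → Prop :=
  Relation.ReflTransGen fun i j => ∃ k, (D i).tgt k = j

variable (D : ∀ i, Decomposition ν i)

-- A piece is subdivided until its ratio drops below `ε`; the last step costs at most a factor `ρ`.
lemma exists_decomposition_of_pow_le [BorelSpace E] {l ρ : ℝ} (hρ0 : 0 < ρ)
    (hρ : ∀ i k, ρ ≤ ratio ((D i).f k)) (hl0 : 0 < l) (hl : ∀ i k, ratio ((D i).f k) ≤ l) (n : ℕ) :
    ∀ ε, l ^ n ≤ ε → ρ * ε ≤ 1 → ∀ i, ∃ C : Decomposition ν i, ∀ k,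
      ρ * ε ≤ ratio (C.f k) ∧ ratio (C.f k) ≤ ε ∧ Reach D i (C.tgt k) := by
  have hsingle : ∀ ε, 1 ≤ ε → ρ * ε ≤ 1 → ∀ i, ∃ C : Decomposition ν i, ∀ k,
      ρ * ε ≤ ratio (C.f k) ∧ ratio (C.f k) ≤ ε ∧ Reach D i (C.tgt k) := fun ε hε hρε i =>
    ⟨single ν i, fun _ => by simpa [single] using ⟨hρε, hε, .refl⟩⟩
  induction n with
  | zero => simpa using hsingle
  | succ n ih =>
    intro ε hlε hρε i
    rcases le_total 1 ε with hε | hε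
    · exact hsingle ε hε hρε i
    have hpos : ∀ k, (0 : ℝ) < ratio ((D i).f k) := fun k => hρ0.trans_le (hρ i k)
    have hsub : ∀ k, ∃ C : Decomposition ν ((D i).tgt k), ∀ j,
        ρ * (ε / ratio ((D i).f k)) ≤ ratio (C.f j) ∧ ratio (C.f j) ≤ ε / ratio ((D i).f k) ∧
          Reach D ((D i).tgt k) (C.tgt j) := fun k => by
      refine ih _ ?_ ?_ _
      · rw [le_div_iff₀ (hpos k)]
        exact (mul_le_mul_of_nonneg_left (hl i k) (by positivity)).trans hlε
      · rw [mul_div_assoc', div_le_one (hpos k)]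
        exact (mul_le_of_le_one_right hρ0.le hε).trans (hρ i k)
    choose C hC using hsub
    refine ⟨(D i).refine C, fun ⟨k, j⟩ => ?_⟩
    obtain ⟨hle, hge, hreach⟩ := hC k j
    simp only [refine, DilationEquiv.ratio_trans, NNReal.coe_mul]
    refine ⟨?_, (le_div_iff₀ (hpos k)).1 hge, hreach.head ⟨k, rfl⟩⟩
    rwa [mul_div_assoc', div_le_iff₀ (hpos k)] at hle

section Contracting

variable [Finite I] (hD : ∀ i k, ratio ((D i).f k) < 1)

include hD in
lemma exists_mem_Ioo_forall_ratio_le : ∃ l ∈ Ioo (0 : ℝ) 1, ∀ i k, ratio ((D i).f k) ≤ l := by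
  have hIoo : ∀ᶠ l : ℝ in 𝓝[<] 1, l ∈ Ioo 0 1 := Ioo_mem_nhdsLT zero_lt_one
  have hle : ∀ᶠ l : ℝ in 𝓝[<] 1, ∀ i k, ratio ((D i).f k) ≤ l :=
    eventually_all.2 fun i => eventually_all.2 fun k => eventually_of_mem
      (Ico_mem_nhdsLT (NNReal.coe_lt_one.2 (hD i k))) fun _ hl => hl.1
  exact (hIoo.and hle).exists

lemma exists_pos_forall_le_ratio : ∃ ρ : ℝ, 0 < ρ ∧ ∀ i k, ρ ≤ ratio ((D i).f k) := by
  have hle : ∀ᶠ ρ : ℝ in 𝓝[>] 0, ∀ i k, ρ ≤ ratio ((D i).f k) :=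
    eventually_all.2 fun i => eventually_all.2 fun k => eventually_of_mem
      (Ioc_mem_nhdsGT (NNReal.coe_pos.2 (Dilation.ratio_pos _))) fun _ hρ => hρ.2
  exact ((eventually_mem_nhdsWithin (a := (0 : ℝ))).and hle).exists

include hD in
lemma exists_pos_forall_exists_decomposition [BorelSpace E] :
    ∃ ρ : ℝ, 0 < ρ ∧ ∀ ε ∈ Ioc (0 : ℝ) 1, ∀ i, ∃ C : Decomposition ν i, ∀ k,
      ρ * ε ≤ ratio (C.f k) ∧ ratio (C.f k) ≤ ε ∧ Reach D i (C.tgt k) := by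
  obtain ⟨l, ⟨hl0, hl1⟩, hl⟩ := exists_mem_Ioo_forall_ratio_le D hD
  obtain ⟨ρ, hρ0, hρ⟩ := exists_pos_forall_le_ratio D
  refine ⟨min ρ 1, by positivity, fun ε ⟨hε0, hε1⟩ i => ?_⟩
  obtain ⟨n, hn⟩ := exists_pow_lt_of_lt_one hε0 hl1
  exact exists_decomposition_of_pow_le D (by positivity)
    (fun i k => (min_le_left ρ 1).trans (hρ i k)) hl0 hl n ε hn.le
    (mul_le_one₀ (min_le_right ρ 1) hε0.le hε1) i

end Contracting

end Reach

section Support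

variable {I E : Type*} [NormedAddCommGroup E] [MeasurableSpace E] {ν : I → Measure E}

variable [Finite I] (D : ∀ i, Decomposition ν i) (hD : ∀ i k, ratio ((D i).f k) < 1)

include hD in
lemma exists_radii_mapsTo : ∃ r : ℕ → ℝ, 0 ≤ r 0 ∧ Tendsto r atTop atTop ∧
    ∀ n i k, MapsTo ((D i).f k) (closedBall 0 (r (n + 1))) (closedBall 0 (r n)) := by
  obtain ⟨l, ⟨hl0, hl1⟩, hl⟩ := exists_mem_Ioo_forall_ratio_le D hD
  obtain ⟨c, hc0, hc⟩ : ∃ c : ℝ, 0 ≤ c ∧ ∀ i k, dist ((D i).f k 0) 0 ≤ c :=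
    ((eventually_ge_atTop 0).and (eventually_all.2 fun i => eventually_all.2 fun k =>
      eventually_ge_atTop _)).exists
  have := sub_pos.2 hl1
  have hfix : l * (c / (1 - l)) + c = c / (1 - l) := by
    field_simp
    ring
  -- The ball of radius `c / (1 - l)` is invariant, and the excess over it shrinks by a factor `l`.
  refine ⟨fun n => c / (1 - l) + l⁻¹ ^ n, by positivity, tendsto_atTop_add_const_left _ _
    (tendsto_pow_atTop_atTop_of_one_lt ((one_lt_inv₀ hl0).2 hl1)), fun n i k y hy => ?_⟩
  calc dist ((D i).f k y) 0 ≤ ratio ((D i).f k) * dist y 0 + dist ((D i).f k 0) 0 := by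
        rw [← Dilation.dist_eq]
        exact dist_triangle _ _ _
    _ ≤ l * (c / (1 - l) + l⁻¹ ^ (n + 1)) + c := by
        gcongr
        exacts [hl i k, hy, hc i k]
    _ = c / (1 - l) + l⁻¹ ^ n := by
        rw [mul_add, pow_succ', mul_inv_cancel_left₀ hl0.ne', add_right_comm, hfix]

include hD in
lemma exists_forall_measure_compl_closedBall_eq_zero [ProperSpace E]
    [BorelSpace E] [∀ i, IsProbabilityMeasure (ν i)] :
    ∃ R, 0 ≤ R ∧ ∀ i, ν i (closedBall 0 R)ᶜ = 0 := by
  obtain ⟨r, hr0, hr, hmaps⟩ := exists_radii_mapsTo D hD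
  have hpull : ∀ (η : ℝ≥0∞) (n : ℕ), (∀ j, ν j (closedBall 0 (r n))ᶜ ≤ η) →
      ∀ j, ν j (closedBall 0 (r 0))ᶜ ≤ η := by
    intro η n
    induction n with
    | zero => exact id
    | succ n ih => exact fun h => ih fun j =>
        (D j).measure_compl_le_of_mapsTo measurableSet_closedBall (hmaps n j) h
  have htight : ∀ j, Tendsto (fun n => ν j (closedBall 0 (r n))ᶜ) atTop (𝓝 0) := by
    intro j
    have h := tendsto_measure_compl_closedBall_of_isTightMeasureSet
      (isTightMeasureSet_singleton (μ := ν j)) (0 : E)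
    simp only [iSup_singleton] at h
    exact h.comp hr
  refine ⟨r 0, hr0, fun i => nonpos_iff_eq_zero.1 (le_of_forall_gt fun η hη => ?_)⟩
  obtain ⟨η', hη'0, hη'⟩ := exists_between hη
  obtain ⟨n, hn⟩ := (eventually_all.2 fun j => (htight j).eventually (gt_mem_nhds hη'0)).exists
  exact (hpull η' n (fun j => (hn j).le) i).trans_lt hη'

end Support

end Decomposition

end Decomposition

/-! ### Scaling exponents of decomposable families -/

namespace Decomposition

open Dilation (ratio)
open Module (finrank)

variable {I E : Type*} [NormedAddCommGroup E] [NormedSpace ℝ E] [FiniteDimensional ℝ E]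
  [MeasureSpace E] [BorelSpace E] [(volume : Measure E).IsAddHaarMeasure]
  {ν : I → Measure E} [∀ i, IsProbabilityMeasure (ν i)] {i : I} {q : ℝ}

instance (C : Decomposition ν i) (k : C.Piece) :
    IsProbabilityMeasure ((ν (C.tgt k)).map (C.f k)) :=
  Measure.isProbabilityMeasure_map (C.f k).toHomeomorph.measurable.aemeasurable

lemma dominatedBy_ballMoment_tgt (C : Decomposition ν i) (hq : 0 ≤ q) {k : C.Piece}
    (hk : ratio (C.f k) ≤ 1) :
    DominatedBy (ballMoment (ν (C.tgt k)) q) (ballMoment (ν i) q) := by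
  set c : ℝ≥0∞ := powPos q (C.w k) * (ratio (C.f k) : ℝ≥0∞) ^ finrank ℝ E
  have hw : C.w k ≠ ∞ := ne_top_of_le_ne_top ENNReal.one_ne_top
    (C.sum_w ▸ Finset.single_le_sum (fun _ _ => zero_le) (Finset.mem_univ k))
  have hc0 : c ≠ 0 := mul_ne_zero (powPos_ne_zero hq (C.w_ne_zero k))
    (pow_ne_zero _ (ENNReal.coe_ne_zero.2 (Dilation.ratio_ne_zero _)))
  have hctop : c ≠ ∞ :=
    ENNReal.mul_ne_top (powPos_ne_top hq hw) (ENNReal.pow_ne_top ENNReal.coe_ne_top)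
  have hpiece : C.w k • (ν (C.tgt k)).map (C.f k) ≤ ν i := by
    rw [C.eq_sum]
    exact Finset.single_le_sum (f := fun k => C.w k • (ν (C.tgt k)).map (C.f k))
      (fun _ _ => Measure.zero_le _) (Finset.mem_univ k)
  refine ⟨c⁻¹, ENNReal.inv_ne_top.2 hc0, fun δ hδ => ?_⟩
  calc ballMoment (ν (C.tgt k)) q δ
      ≤ ballMoment (ν (C.tgt k)) q (δ / ratio (C.f k)) :=
        ballMoment_mono _ hq (le_div_self hδ.le (NNReal.coe_pos.2 (Dilation.ratio_pos _)) hk)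
    _ = c⁻¹ * ballMoment (C.w k • (ν (C.tgt k)).map (C.f k)) q δ := by
        rw [ballMoment_smul _ _ hq, ballMoment_map_dilationEquiv, ← mul_assoc (powPos q _),
          ENNReal.inv_mul_cancel_left hc0 hctop]
    _ ≤ c⁻¹ * ballMoment (ν i) q δ := by
        gcongr
        exact ballMoment_mono_measure hpiece hq δ

lemma dominatedBy_ballMoment_of_reach {D : ∀ i, Decomposition ν i}
    (hD : ∀ i k, ratio ((D i).f k) < 1) (hq : 0 ≤ q) {j : I} (h : Reach D i j) :
    DominatedBy (ballMoment (ν j) q) (ballMoment (ν i) q) := by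
  induction h with
  | refl => exact .refl _
  | tail _ h ih =>
    obtain ⟨k, rfl⟩ := h
    exact ((D _).dominatedBy_ballMoment_tgt hq (hD _ k).le).trans ih

section Uniform

variable {C : Decomposition ν i} {ρ ε δ R : ℝ}

lemma volume_closedBall_mul_ballMoment_le (hq : 1 ≤ q) (hρ : 0 < ρ) (hε : 0 < ε)
    (hδ : δ ∈ Ioc (0 : ℝ) 1) (hC : ∀ k, ρ * ε ≤ ratio (C.f k) ∧ ratio (C.f k) ≤ ε) (hR0 : 0 ≤ R)
    (hR : ∀ j, ν j (closedBall 0 R)ᶜ = 0) {M : ℝ≥0∞}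
    (hM : ∀ k, ballMoment (ν (C.tgt k)) q (ρ⁻¹ * δ) ≤ M) :
    volume (closedBall (0 : E) 1) * ballMoment (ν i) q (ε * δ) ≤
      ballMoment (ν i) q ((2 * R + 2) * ε) * M := by
  have hq0 : 0 ≤ q := zero_le_one.trans hq
  have hcancel : ENNReal.ofReal (ε ^ finrank ℝ E) ≠ 0 :=
    (ENNReal.ofReal_pos.2 (by positivity)).ne'
  have hπ : ∀ k, (ν (C.tgt k)).map (C.f k) (closedBall (C.f k 0) (ε * R))ᶜ = 0 := fun k =>
    map_dilationEquiv_compl_closedBall_eq_zero (hR _) _ (mul_le_mul_of_nonneg_right (hC k).2 hR0)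
  have hmix := ballMoment_sum_smul_le_of_uniform_le hq C.eq_sum hπ ε fun k =>
    (ballMoment_map_dilationEquiv_le _ hq0 hρ hδ.1.le (hC k).1 (hC k).2).trans
      (mul_le_mul_right (hM k) (ENNReal.ofReal (ε ^ finrank ℝ E)))
  rw [← mul_one ε, Measure.addHaar_closedBall_mul _ _ hε.le zero_le_one, mul_one, mul_assoc,
    mul_left_comm (ballMoment _ _ _), ENNReal.mul_le_mul_iff_right hcancel ENNReal.ofReal_ne_top]
    at hmix
  refine hmix.trans ?_
  gcongr
  refine ballMoment_mono _ hq0 ?_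
  linear_combination ε * hδ.2

lemma ballMoment_mul_le_volume_closedBall_mul (hq0 : 0 ≤ q) (hq1 : q ≤ 1) (hρ : 0 < ρ) (hε : 0 < ε)
    (hδ : δ ∈ Ioc (0 : ℝ) 1) (hC : ∀ k, ρ * ε ≤ ratio (C.f k) ∧ ratio (C.f k) ≤ ε) (hR0 : 0 ≤ R)
    (hR : ∀ j, ν j (closedBall 0 R)ᶜ = 0) {m : ℝ≥0∞}
    (hm : ∀ k, m ≤ ballMoment (ν (C.tgt k)) q δ) :
    ballMoment (ν i) q ε * (ENNReal.ofReal (ρ ^ finrank ℝ E) * m) ≤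
      volume (closedBall (0 : E) (2 * R + 2)) * ballMoment (ν i) q (ε * δ) := by
  have hcancel : ENNReal.ofReal (ε ^ finrank ℝ E) ≠ 0 :=
    (ENNReal.ofReal_pos.2 (by positivity)).ne'
  have hπ : ∀ k, (ν (C.tgt k)).map (C.f k) (closedBall (C.f k 0) (ε * R))ᶜ = 0 := fun k =>
    map_dilationEquiv_compl_closedBall_eq_zero (hR _) _ (mul_le_mul_of_nonneg_right (hC k).2 hR0)
  have hmix := le_ballMoment_sum_smul_of_uniform_le hq0 hq1 C.eq_sum hπ ε fun k =>
    (mul_le_mul_right (hm k) (ENNReal.ofReal ((ρ * ε) ^ finrank ℝ E))).trans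
      (le_ballMoment_map_dilationEquiv _ hq0 (by positivity) hδ.1.le (hC k).1 (hC k).2)
  have hball : volume (closedBall (0 : E) (ε + ε * δ + 2 * (ε * R))) ≤
      ENNReal.ofReal (ε ^ finrank ℝ E) * volume (closedBall (0 : E) (2 * R + 2)) := by
    rw [← Measure.addHaar_closedBall_mul _ 0 hε.le (by positivity)]
    refine measure_mono (closedBall_subset_closedBall ?_)
    linear_combination ε * hδ.2
  refine (ENNReal.mul_le_mul_iff_right hcancel ENNReal.ofReal_ne_top).1 ?_
  calc ENNReal.ofReal (ε ^ finrank ℝ E) *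
        (ballMoment (ν i) q ε * (ENNReal.ofReal (ρ ^ finrank ℝ E) * m))
      = ballMoment (ν i) q ε * (ENNReal.ofReal ((ρ * ε) ^ finrank ℝ E) * m) := by
        rw [mul_pow, ENNReal.ofReal_mul (by positivity)]
        ring
    _ ≤ volume (closedBall (0 : E) (ε + ε * δ + 2 * (ε * R))) * ballMoment (ν i) q (ε * δ) := hmix
    _ ≤ ENNReal.ofReal (ε ^ finrank ℝ E) *
        (volume (closedBall (0 : E) (2 * R + 2)) * ballMoment (ν i) q (ε * δ)) :=
        (mul_le_mul_left hball _).trans_eq (mul_assoc _ _ _)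

end Uniform

section Existence

variable [Finite I] {D : ∀ i, Decomposition ν i} (hD : ∀ i k, ratio ((D i).f k) < 1)

include hD

lemma isDoublingGauge_ballMoment (hq : 0 ≤ q) (i : I) : IsDoublingGauge (ballMoment (ν i) q) := by
  obtain ⟨R, -, hR⟩ := exists_forall_measure_compl_closedBall_eq_zero D hD
  exact LqGIFS.isDoublingGauge_ballMoment (IsProbabilityMeasure.ne_zero _) (hR i) hq

lemma exists_ballMoment_mul_le_mul (hq : 1 ≤ q) (i : I) :
    ∃ K : ℝ≥0∞, K ≠ ∞ ∧ ∀ ε ∈ Ioc (0 : ℝ) 1, ∀ δ ∈ Ioc (0 : ℝ) 1,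
      ballMoment (ν i) q (ε * δ) ≤ K * (ballMoment (ν i) q ε * ballMoment (ν i) q δ) := by
  have hq0 : 0 ≤ q := zero_le_one.trans hq
  obtain ⟨ρ, hρ, hdec⟩ := exists_pos_forall_exists_decomposition D hD
  obtain ⟨R, hR0, hR⟩ := exists_forall_measure_compl_closedBall_eq_zero D hD
  obtain ⟨K₁, hK₁, hle₁⟩ := dominatedBy_ballMoment_mul (ν i) hq0 (2 * R + 2)
  obtain ⟨K₂, hK₂, hle₂⟩ := DominatedBy.exists_uniform fun j (hj : Reach D i j) =>
    (dominatedBy_ballMoment_mul (ν j) hq0 ρ⁻¹).trans (dominatedBy_ballMoment_of_reach hD hq0 hj)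
  set V : ℝ≥0∞ := volume (closedBall (0 : E) 1)
  have hV0 : V ≠ 0 := (measure_closedBall_pos _ _ one_pos).ne'
  have hVtop : V ≠ ∞ := measure_closedBall_lt_top.ne
  refine ⟨V⁻¹ * (K₁ * K₂), by finiteness, fun ε hε δ hδ => ?_⟩
  obtain ⟨C, hC⟩ := hdec ε hε i
  rw [mul_assoc, ← ENNReal.mul_le_iff_le_inv hV0 hVtop]
  calc V * ballMoment (ν i) q (ε * δ)
      ≤ ballMoment (ν i) q ((2 * R + 2) * ε) * (K₂ * ballMoment (ν i) q δ) :=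
        volume_closedBall_mul_ballMoment_le hq hρ hε.1 hδ (fun k => ⟨(hC k).1, (hC k).2.1⟩) hR0 hR
          fun k => hle₂ _ (hC k).2.2 δ hδ.1
    _ ≤ K₁ * ballMoment (ν i) q ε * (K₂ * ballMoment (ν i) q δ) := by
        gcongr
        exact hle₁ ε hε.1
    _ = K₁ * K₂ * (ballMoment (ν i) q ε * ballMoment (ν i) q δ) := mul_mul_mul_comm _ _ _ _

lemma exists_mul_le_ballMoment_mul (hq0 : 0 ≤ q) (hq1 : q ≤ 1)
    (hi : ∀ j, Reach D i j → Reach D j i) :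
    ∃ K : ℝ≥0∞, K ≠ ∞ ∧ ∀ ε ∈ Ioc (0 : ℝ) 1, ∀ δ ∈ Ioc (0 : ℝ) 1,
      ballMoment (ν i) q ε * ballMoment (ν i) q δ ≤ K * ballMoment (ν i) q (ε * δ) := by
  obtain ⟨ρ, hρ, hdec⟩ := exists_pos_forall_exists_decomposition D hD
  obtain ⟨R, hR0, hR⟩ := exists_forall_measure_compl_closedBall_eq_zero D hD
  obtain ⟨K, hK, hle⟩ := DominatedBy.exists_uniform fun j hj =>
    dominatedBy_ballMoment_of_reach hD hq0 (hi j hj)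
  set P : ℝ≥0∞ := ENNReal.ofReal (ρ ^ finrank ℝ E)
  have hP0 : P ≠ 0 := (ENNReal.ofReal_pos.2 (by positivity)).ne'
  have hPtop : P ≠ ∞ := ENNReal.ofReal_ne_top
  set V : ℝ≥0∞ := volume (closedBall (0 : E) (2 * R + 2))
  have hVtop : V ≠ ∞ := measure_closedBall_lt_top.ne
  refine ⟨K * P⁻¹ * V, by finiteness, fun ε hε δ hδ => ?_⟩
  obtain ⟨C, hC⟩ := hdec ε hε i
  have hK0 : K ≠ 0 := by
    rintro rfl
    refine (isDoublingGauge_ballMoment hD hq0 i).ne_zero δ hδ.1 ?_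
    simpa using hle i .refl δ hδ.1
  calc ballMoment (ν i) q ε * ballMoment (ν i) q δ
      = K * P⁻¹ * (ballMoment (ν i) q ε * (P * (ballMoment (ν i) q δ / K))) := by
        rw [mul_left_comm _ P, mul_assoc K, ENNReal.inv_mul_cancel_left hP0 hPtop,
          mul_left_comm K, ENNReal.mul_div_cancel hK0 hK]
    _ ≤ K * P⁻¹ * (V * ballMoment (ν i) q (ε * δ)) :=
        mul_le_mul_right (ballMoment_mul_le_volume_closedBall_mul hq0 hq1 hρ hε.1 hδ
          (fun k => ⟨(hC k).1, (hC k).2.1⟩) hR0 hR fun k =>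
            ENNReal.div_le_of_le_mul' (hle _ (hC k).2.2 δ hδ.1)) _
    _ = K * P⁻¹ * V * ballMoment (ν i) q (ε * δ) := (mul_assoc _ _ _).symm

theorem exists_hasScalingExponent (hq : 0 ≤ q) (hi : ∀ j, Reach D i j → Reach D j i) :
    ∃ s, ∀ j, Reach D i j → HasScalingExponent (ballMoment (ν j) q) s := by
  have hgauge := isDoublingGauge_ballMoment hD hq i
  obtain ⟨s, hs⟩ : ∃ s, HasScalingExponent (ballMoment (ν i) q) s := by
    rcases le_total q 1 with hq1 | hq1
    · obtain ⟨K, hK, hmul⟩ := exists_mul_le_ballMoment_mul hD hq hq1 hi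
      exact hgauge.exists_hasScalingExponent_of_supermultiplicative hK hmul
    · obtain ⟨K, hK, hmul⟩ := exists_ballMoment_mul_le_mul hD hq1 i
      exact hgauge.exists_hasScalingExponent_of_submultiplicative hK hmul
  exact ⟨s, fun j hj => hs.of_dominatedBy hgauge.ne_zero (fun δ _ => hgauge.ne_top δ)
    (dominatedBy_ballMoment_of_reach hD hq hj) (dominatedBy_ballMoment_of_reach hD hq (hi j hj))⟩

end Existence

end Decomposition

/-! ### Mesh sums -/

section Mesh

variable (ν : Measure ℝ) {q δ : ℝ}

/-- The mesh moment sum `Dq1` as an extended nonnegative real, hence with no summability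
condition. -/
noncomputable def meshMoment (ν : Measure ℝ) (q δ : ℝ) : ℝ≥0∞ :=
  ∑' k : ℤ, powPos q (ν (meshCube1 δ k))

lemma toReal_meshMoment [IsFiniteMeasure ν] (hq : 0 ≤ q) (δ : ℝ) :
    (meshMoment ν q δ).toReal = Dq1 ν δ q := by
  rw [Dq1, meshMoment, ENNReal.tsum_toReal_eq fun k => powPos_ne_top hq (measure_ne_top _ _)]
  refine tsum_congr fun k => ?_
  rw [powPos, apply_ite ENNReal.toReal, ENNReal.toReal_zero, ENNReal.toReal_rpow]

lemma lintegral_eq_tsum_setLIntegral_Ico (hδ : 0 < δ) (f : ℝ → ℝ≥0∞) :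
    ∫⁻ x, f x = ∑' k : ℤ, ∫⁻ x in Ico (k * δ) ((k + 1) * δ), f x := by
  have hunion := iUnion_Ico_zsmul hδ
  have hdisj := pairwise_disjoint_Ico_zsmul δ
  simp only [zsmul_eq_mul, Int.cast_add, Int.cast_one] at hunion hdisj
  rw [← setLIntegral_univ, ← hunion, lintegral_iUnion (fun _ => measurableSet_Ico) hdisj]

lemma setLIntegral_const_Ico_mesh (δ : ℝ) (k : ℤ) (c : ℝ≥0∞) :
    ∫⁻ _ in Ico (k * δ) ((k + 1) * δ), c = ENNReal.ofReal δ * c := by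
  rw [setLIntegral_const, Real.volume_Ico, ← sub_mul, add_sub_cancel_left, one_mul, mul_comm]

lemma ofReal_mul_meshMoment_le (hq : 0 ≤ q) (hδ : 0 < δ) :
    ENNReal.ofReal δ * meshMoment ν q δ ≤ ballMoment ν q δ := by
  rw [ballMoment, lintegral_eq_tsum_setLIntegral_Ico hδ, meshMoment, ← ENNReal.tsum_mul_left]
  refine ENNReal.tsum_le_tsum fun k => ?_
  rw [← setLIntegral_const_Ico_mesh δ k]
  refine setLIntegral_mono' measurableSet_Ico fun x ⟨hx₁, hx₂⟩ => powPos_mono hq (measure_mono ?_)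
  rintro y ⟨hy₁, hy₂⟩
  rw [mem_closedBall, Real.dist_eq, abs_le]
  constructor <;> linarith

lemma closedBall_subset_iUnion_meshCube1 {k : ℤ} {x : ℝ} (hx : x ∈ Ico (k * δ) ((k + 1) * δ)) :
    closedBall x δ ⊆ ⋃ c ∈ Finset.Icc (-1 : ℤ) 1, meshCube1 δ (k + c) := by
  intro y hy
  rw [mem_closedBall, Real.dist_eq, abs_le] at hy
  obtain ⟨hx₁, hx₂⟩ := hx
  simp only [mem_iUnion₂, meshCube1, mem_Icc, Int.cast_add]
  rcases le_total y (k * δ) with hleft | hleft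
  · exact ⟨-1, by decide, by push_cast; constructor <;> linarith⟩
  rcases le_total y ((k + 1) * δ) with hright | hright
  · exact ⟨0, by decide, by push_cast; constructor <;> linarith⟩
  · exact ⟨1, by decide, by push_cast; constructor <;> linarith⟩

lemma ballMoment_le_mul_meshMoment (hq : 0 ≤ q) (hδ : 0 < δ) :
    ballMoment ν q δ ≤ powPos q 3 * 3 * (ENNReal.ofReal δ * meshMoment ν q δ) := by
  set f : ℤ → ℝ≥0∞ := fun k => powPos q (ν (meshCube1 δ k))
  have hcard : (Finset.Icc (-1 : ℤ) 1).card = 3 := rfl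
  have hball : ∀ k : ℤ, ∀ x ∈ Ico (k * δ) ((k + 1) * δ), powPos q (ν (closedBall x δ)) ≤
      powPos q 3 * ∑ c ∈ Finset.Icc (-1 : ℤ) 1, f (k + c) := fun k x hx => by
    refine (powPos_mono hq ((measure_mono (closedBall_subset_iUnion_meshCube1 hx)).trans
      (measure_biUnion_finset_le _ _))).trans ?_
    simpa [hcard] using powPos_sum_le_card (Finset.Icc (-1 : ℤ) 1) hq
      fun c => ν (meshCube1 δ (k + c))
  have hshift : ∀ c : ℤ, ∑' k, f (k + c) = meshMoment ν q δ := fun c =>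
    (Equiv.addRight c).tsum_eq f
  calc ballMoment ν q δ
      ≤ ∑' k : ℤ, ENNReal.ofReal δ * (powPos q 3 * ∑ c ∈ Finset.Icc (-1 : ℤ) 1, f (k + c)) := by
        rw [ballMoment, lintegral_eq_tsum_setLIntegral_Ico hδ]
        refine ENNReal.tsum_le_tsum fun k => ?_
        rw [← setLIntegral_const_Ico_mesh δ k]
        exact setLIntegral_mono' measurableSet_Ico (hball k)
    _ = powPos q 3 * 3 * (ENNReal.ofReal δ * meshMoment ν q δ) := by
        rw [ENNReal.tsum_mul_left, ENNReal.tsum_mul_left, Summable.tsum_finsetSum fun _ _ =>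
          ENNReal.summable]
        simp only [hshift, Finset.sum_const, hcard, nsmul_eq_mul, Nat.cast_ofNat]
        ring

lemma HasScalingExponent.hasLq1 {ν : Measure ℝ} [IsFiniteMeasure ν] {s : ℝ} (hq : 0 ≤ q)
    (hgauge : IsDoublingGauge (ballMoment ν q)) (h : HasScalingExponent (ballMoment ν q) s) :
    HasLq1 ν q (s + 1) := by
  have hC : powPos q 3 * 3 ≠ ∞ := ENNReal.mul_ne_top (powPos_ne_top hq (by simp)) (by simp)
  have hmesh : HasScalingExponent (fun δ => ENNReal.ofReal δ * meshMoment ν q δ) s :=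
    h.of_dominatedBy hgauge.ne_zero (fun δ _ => hgauge.ne_top δ)
      ⟨1, ENNReal.one_ne_top, fun δ hδ => by simpa using ofReal_mul_meshMoment_le ν hq hδ⟩
      ⟨_, hC, fun δ hδ => ballMoment_le_mul_meshMoment ν hq hδ⟩
  have hne_zero : ∀ δ, 0 < δ → meshMoment ν q δ ≠ 0 := fun δ hδ hzero =>
    hgauge.ne_zero δ hδ (by simpa [hzero] using ballMoment_le_mul_meshMoment ν hq hδ)
  have hne_top : ∀ δ, 0 < δ → meshMoment ν q δ ≠ ∞ := fun δ hδ htop =>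
    hgauge.ne_top δ (by simpa [htop, ENNReal.mul_top, hδ] using ofReal_mul_meshMoment_le ν hq hδ)
  simpa only [HasScalingExponent, HasLq1, toReal_meshMoment ν hq] using
    hmesh.of_ofReal_mul hne_zero hne_top

namespace Decomposition

open Dilation (ratio)

theorem exists_hasLq1 {I : Type*} [Finite I] {ν : I → Measure ℝ} [∀ i, IsProbabilityMeasure (ν i)]
    {D : ∀ i, Decomposition ν i} (hD : ∀ i k, ratio ((D i).f k) < 1) (hq : 0 ≤ q) {i : I}
    (hi : ∀ j, Reach D i j → Reach D j i) :
    ∃ s, ∀ j, Reach D i j → HasLq1 (ν j) q s := by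
  obtain ⟨s, hs⟩ := exists_hasScalingExponent hD hq hi
  exact ⟨s + 1, fun j hj => (hs j hj).hasLq1 hq (isDoublingGauge_ballMoment hD hq j)⟩

end Decomposition

end Mesh

/-! ### Coordinate projections of box-like measures -/

namespace BoxLikeGIFS

variable {V E : Type} (S : BoxLikeGIFS V E)

lemma measurable_map (e : E) : Measurable (S.map e) := by
  unfold BoxLikeGIFS.map
  split_ifs <;> fun_prop

/-- The coordinate of a point selected by a Boolean, with the convention of `projMeas`. -/
def coord (c : Bool) (z : ℝ × ℝ) : ℝ := if c then z.2 else z.1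

lemma measurable_coord (c : Bool) : Measurable (coord c) := by
  cases c
  exacts [measurable_fst, measurable_snd]

lemma projMeas_eq_map_coord (μ : V → Measure (ℝ × ℝ)) (i : V × Bool) :
    projMeas μ i = (μ i.1).map (coord i.2) := by
  rcases i with ⟨v, _ | _⟩ <;> rfl

instance isProbabilityMeasure_projMeas {μ : V → Measure (ℝ × ℝ)}
    [∀ v, IsProbabilityMeasure (μ v)] (i : V × Bool) : IsProbabilityMeasure (projMeas μ i) :=
  projMeas_eq_map_coord μ i ▸ Measure.isProbabilityMeasure_map (measurable_coord i.2).aemeasurable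

/-- The coordinate of `z` on which the coordinate `c` of `S.map e z` depends. -/
def turn (e : E) (c : Bool) : Bool := if S.diag e then c else !c

lemma turn_not (e : E) (c : Bool) : S.turn e (!c) = !S.turn e c := by
  unfold turn
  split_ifs <;> rfl

/-- The signed factor by which `S.map e` scales onto the coordinate `c`. -/
def slope (e : E) (c : Bool) : ℝ := if c then S.sb e * S.b e else S.sa e * S.a e

lemma abs_slope (e : E) (c : Bool) : |S.slope e c| = if c then S.b e else S.a e := by
  have ha := abs_of_pos (S.a_mem e).1
  have hb := abs_of_pos (S.b_mem e).1
  cases c <;> rcases S.sa_mem e with h | h <;> rcases S.sb_mem e with h' | h' <;>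
    simp [slope, h, h', ha, hb]

lemma abs_slope_mem_Ioo (e : E) (c : Bool) : |S.slope e c| ∈ Ioo 0 1 := by
  rw [abs_slope]
  split_ifs
  exacts [S.b_mem e, S.a_mem e]

/-- The similarity of the line through which `S.map e` acts on the coordinate `c`. -/
noncomputable def lineMap (e : E) (c : Bool) : ℝ ≃ᵈ ℝ :=
  DilationEquiv.smulTorsor (coord c (S.trans e)) (abs_pos.1 (S.abs_slope_mem_Ioo e c).1)

lemma ratio_lineMap_lt_one (e : E) (c : Bool) : Dilation.ratio (S.lineMap e c) < 1 := by
  rw [lineMap, DilationEquiv.smulTorsor_ratio _ (x := 0) (y := 1) (by simp)]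
  exact (S.abs_slope_mem_Ioo e c).2

lemma coord_map (e : E) (c : Bool) (z : ℝ × ℝ) :
    coord c (S.map e z) = S.lineMap e c (coord (S.turn e c) z) := by
  cases c <;> cases h : S.diag e <;> simp [coord, turn, slope, lineMap, BoxLikeGIFS.map, h]

section Measure

variable [Fintype E] {p : E → ℝ} {μ : V → Measure (ℝ × ℝ)}

lemma IsGDMeasure.projMeas_eq_sum (hμ : S.IsGDMeasure p μ) (i : V × Bool) :
    projMeas μ i = ∑ e : {e // S.init e = i.1},
      ENNReal.ofReal (p e) • (projMeas μ (S.term e, S.turn e i.2)).map (S.lineMap e i.2) := by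
  have hpiece : ∀ e, ((μ (S.term e)).map (S.map e)).map (coord i.2) =
      (projMeas μ (S.term e, S.turn e i.2)).map (S.lineMap e i.2) := fun e => by
    have hline : Measurable (S.lineMap e i.2) := (S.lineMap e i.2).toHomeomorph.measurable
    rw [projMeas_eq_map_coord, Measure.map_map (measurable_coord _) (S.measurable_map e),
      Measure.map_map hline (measurable_coord _)]
    exact congrArg (Measure.map · _) (funext (S.coord_map e i.2))
  rw [projMeas_eq_map_coord, hμ.2 i.1, ← Finset.sum_filter,
    Finset.sum_subtype (F := inferInstance) (p := fun e => S.init e = i.1) _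
      fun e => Finset.mem_filter_univ e,
    Measure.map_finset_sum (measurable_coord i.2).aemeasurable]
  simp only [Measure.map_smul, hpiece]

/-- The decomposition of a coordinate projection of `μ v` along the edges leaving `v`. -/
noncomputable def projDecomposition (hp : ∀ e, 0 < p e) (hμ : S.IsGDMeasure p μ) (i : V × Bool) :
    Decomposition (projMeas μ) i where
  Piece := {e // S.init e = i.1}
  fintype := inferInstance
  w e := ENNReal.ofReal (p e)
  w_ne_zero e := (ENNReal.ofReal_pos.2 (hp e)).ne'
  tgt e := (S.term e, S.turn e i.2)
  f e := S.lineMap e i.2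
  eq_sum := hμ.projMeas_eq_sum S i

end Measure

section Reach

/-- One step of the coordinate dynamics: some edge `e` leaves the vertex of `i`, and the coordinate
`i.2` of `S.map e` is a function of the coordinate `j.2` at the terminal vertex of `e`. -/
def CoordStep (i j : V × Bool) : Prop :=
  ∃ e, S.init e = i.1 ∧ (S.term e, S.turn e i.2) = j

/-- The coordinate `j` is reached from the coordinate `i` along a directed path. -/
def CoordReach : V × Bool → V × Bool → Prop := Relation.ReflTransGen S.CoordStep

variable {S} {i j : V × Bool}

lemma CoordReach.flip (h : S.CoordReach i j) : S.CoordReach (i.1, !i.2) (j.1, !j.2) := by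
  refine Relation.ReflTransGen.lift (fun i : V × Bool => (i.1, !i.2)) ?_ _ _ h
  rintro i _ ⟨e, he, rfl⟩
  exact ⟨e, he, congrArg (Prod.mk _) (S.turn_not e i.2)⟩

lemma exists_coordReach (hSC : S.StronglyConnected) (i : V × Bool) (v : V) :
    ∃ c, S.CoordReach i (v, c) := by
  induction hSC i.1 v with
  | single h =>
    obtain ⟨e, he, rfl⟩ := h
    exact ⟨S.turn e i.2, .single ⟨e, he, rfl⟩⟩
  | tail _ h ih =>
    obtain ⟨c, hc⟩ := ih
    obtain ⟨e, he, rfl⟩ := h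
    exact ⟨S.turn e c, hc.tail ⟨e, he, rfl⟩⟩

lemma CoordReach.symm (hSC : S.StronglyConnected) (h : S.CoordReach i j) : S.CoordReach j i := by
  obtain ⟨c, hc⟩ := exists_coordReach hSC j i.1
  rcases Bool.eq_or_eq_not c i.2 with rfl | rfl
  · exact hc
  · -- The closed walk exchanges the coordinates, so walking it twice restores them.
    have hback : S.CoordReach (i.1, !i.2) (i.1, !!i.2) := CoordReach.flip (h.trans hc)
    rw [Bool.not_not] at hback
    exact hc.trans hback

lemma CoordReach.snd_eq (hdiag : ∀ e, S.diag e = true) (h : S.CoordReach i j) : j.2 = i.2 := by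
  induction h with
  | refl => rfl
  | tail _ h ih =>
    obtain ⟨e, -, rfl⟩ := h
    exact (if_pos (hdiag e)).trans ih

end Reach

section Spectrum

variable {S} [Fintype E] {p : E → ℝ} {μ : V → Measure (ℝ × ℝ)} (hp : ∀ e, 0 < p e)
  (hμ : S.IsGDMeasure p μ)

lemma reach_projDecomposition : Decomposition.Reach (S.projDecomposition hp hμ) = S.CoordReach := by
  refine congrArg Relation.ReflTransGen (funext₂ fun i j => propext ?_)
  exact ⟨fun ⟨⟨e, he⟩, h⟩ => ⟨e, he, h⟩, fun ⟨e, he, h⟩ => ⟨⟨e, he⟩, h⟩⟩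

include hp hμ in
lemma exists_forall_coordReach_hasLq1 [Finite V] (hSC : S.StronglyConnected) (i : V × Bool) :
    ∃ τ : ℝ → ℝ, ∀ q, 0 ≤ q → ∀ j, S.CoordReach i j → HasLq1 (projMeas μ j) q (τ q) := by
  have := hμ.1
  have hspec : ∀ q, 0 ≤ q → ∃ s, ∀ j, S.CoordReach i j → HasLq1 (projMeas μ j) q s := by
    intro q hq
    have hsymm : ∀ j, S.CoordReach i j → S.CoordReach j i := fun j hj => hj.symm hSC
    rw [← reach_projDecomposition hp hμ] at hsymm ⊢
    exact Decomposition.exists_hasLq1 (D := S.projDecomposition hp hμ)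
      (fun i (e : {e // S.init e = i.1}) => S.ratio_lineMap_lt_one e i.2) hq hsymm
  choose! τ hτ using hspec
  exact ⟨τ, hτ⟩

end Spectrum

end BoxLikeGIFS

lemma goodPartition_of_forall_hasLq1 {V : Type*} [Fintype V] {μ : V → Measure (ℝ × ℝ)}
    (c : V → Bool) {τA τB : ℝ → ℝ}
    (hA : ∀ q, 0 ≤ q → ∀ v, HasLq1 (projMeas μ (v, c v)) q (τA q))
    (hB : ∀ q, 0 ≤ q → ∀ v, HasLq1 (projMeas μ (v, !c v)) q (τB q)) :
    GoodPartition μ (Finset.univ.image fun v => (v, c v))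
      (Finset.univ.image fun v => (v, !c v)) := by
  have hcard : ∀ g : V → Bool, (Finset.univ.image fun v => (v, g v)).card = Fintype.card V :=
    fun g => Finset.card_image_of_injective _ fun v v' h => congrArg Prod.fst h
  have hmem : ∀ (g : V → Bool) (i : V × Bool),
      i ∈ Finset.univ.image (fun v => (v, g v)) ↔ g i.1 = i.2 := fun g i => by
    simp [Prod.ext_iff]
  refine ⟨?_, ?_, hcard c, hcard fun v => !c v, τA, τB, ?_, ?_, fun v => ?_⟩
  · refine Finset.disjoint_left.2 fun i hi hi' => ?_
    rw [hmem] at hi hi'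
    simp [hi] at hi'
  · ext i
    cases h : c i.1 <;> cases h' : i.2 <;> simp [hmem, h, h']
  · simpa using hA
  · simpa using hB
  · cases h : c v <;> simp [hmem, h]

namespace BoxLikeGIFS

lemma goodPartition_of_coordReach {V E : Type} [Fintype V] [Fintype E] {S : BoxLikeGIFS V E}
    {p : E → ℝ} {μ : V → Measure (ℝ × ℝ)} (hp : ∀ e, 0 < p e) (hμ : S.IsGDMeasure p μ)
    (hSC : S.StronglyConnected) {v₀ : V} {c : V → Bool}
    (hc : ∀ v, S.CoordReach (v₀, c v₀) (v, c v)) :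
    GoodPartition μ (Finset.univ.image fun v => (v, c v))
      (Finset.univ.image fun v => (v, !c v)) := by
  obtain ⟨τA, hA⟩ := exists_forall_coordReach_hasLq1 hp hμ hSC (v₀, c v₀)
  obtain ⟨τB, hB⟩ := exists_forall_coordReach_hasLq1 hp hμ hSC (v₀, !c v₀)
  exact goodPartition_of_forall_hasLq1 c (fun q hq v => hA q hq _ (hc v))
    fun q hq v => hB q hq _ (hc v).flip

end BoxLikeGIFS

end LqGIFS

/-- splitting of projections.  For a strongly connected planar box-like
self-affine GIFS with weights `p` and graph-directed measure family `μ`, the `L^q`-spectra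
of all coordinate projections `μ_v^x, μ_v^y` exist for `q ≥ 0`; the projection family can
be split into two disjoint families `A`, `B` of cardinality `#V` with common spectra,
splitting `{μ_v^x, μ_v^y}` at every vertex; and if every `T_e` is diagonal one may take
`A = {μ_v^x}_v`, `B = {μ_v^y}_v`. -/
theorem statement0
    {V E : Type} [Fintype V] [Fintype E] [Nonempty V]
    (S : BoxLikeGIFS V E)
    (hSC : S.StronglyConnected)
    (p : E → ℝ) (hp : S.IsWeights p)
    (μ : V → Measure (ℝ × ℝ)) (hμ : S.IsGDMeasure p μ) :
    (∀ q : ℝ, 0 ≤ q → ∀ v : V,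
        (∃ s : ℝ, HasLq1 ((μ v).map Prod.fst) q s) ∧
        (∃ s : ℝ, HasLq1 ((μ v).map Prod.snd) q s)) ∧
    (∃ A B : Finset (V × Bool), GoodPartition μ A B) ∧
    ((∀ e : E, S.diag e = true) →
      GoodPartition μ (Finset.univ.image fun v : V => ((v, false) : V × Bool))
        (Finset.univ.image fun v : V => ((v, true) : V × Bool))) := by
  have hspec : ∀ q : ℝ, 0 ≤ q → ∀ i, ∃ s, HasLq1 (projMeas μ i) q s := fun q hq i => by
    obtain ⟨τ, hτ⟩ := BoxLikeGIFS.exists_forall_coordReach_hasLq1 hp.1 hμ hSC i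
    exact ⟨τ q, hτ q hq i .refl⟩
  obtain ⟨v₀⟩ := ‹Nonempty V›
  choose c hc using BoxLikeGIFS.exists_coordReach hSC (v₀, false)
  refine ⟨fun q hq v => ⟨hspec q hq (v, false), hspec q hq (v, true)⟩, ?_, fun hdiag => ?_⟩
  · exact ⟨_, _, BoxLikeGIFS.goodPartition_of_coordReach hp.1 hμ hSC fun v =>
      ((hc v₀).symm hSC).trans (hc v)⟩
  · have hfst : ∀ v, c v = false := fun v => (hc v).snd_eq hdiag
    exact BoxLikeGIFS.goodPartition_of_coordReach hp.1 hμ hSC (v₀ := v₀) (c := fun _ => false)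
      fun v => hfst v ▸ hc v
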